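/- (Corollary 4.1) Assume the integrality condition on (μ,ν). For every j ∈ ℕ, the squared L²-norm of Λ_j^{μ,ν} is ∫₀^∞ (Λ_j^{μ,ν}(x))² x^{μ+ν+1} dx = (2^{μ+ν−1} Γ(j+(μ+ν+2)/2) Γ(j+(μ−ν+2)/2))/(j! (2j+μ+1) Γ(j+μ+1)). -/

import Mathlib

open MeasureTheory Real Filter Set Metric

noncomputable section

/-- Normalized Bessel function of the first kind: `J̃_α(x) = (x/2)^{-α} J_α(x)`,
given by its (entire) power series. -/
def besselJt (α x : ℝ) : ℝ :=
  ∑' m : ℕ, (-1) ^ m / (m.factorial * Real.Gamma (m + α + 1)) * (x / 2) ^ (2 * m)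

/-- Bessel function of the first kind `J_α`. -/
def besselJ (α x : ℝ) : ℝ :=
  ∑' m : ℕ, (-1) ^ m / (m.factorial * Real.Gamma (m + α + 1)) * (x / 2) ^ (2 * (m : ℝ) + α)

/-- Normalized modified Bessel function `Ĩ_α(x) = (x/2)^{-α} I_α(x)`,
given by its (entire, even) power series. -/
def besselIt (α x : ℝ) : ℝ :=
  ∑' m : ℕ, (x / 2) ^ (2 * m) / (m.factorial * Real.Gamma (m + α + 1))

/-- Modified Bessel function of the first kind `I_α`. -/
def besselI (α x : ℝ) : ℝ :=
  ∑' m : ℕ, (x / 2) ^ (2 * (m : ℝ) + α) / (m.factorial * Real.Gamma (m + α + 1))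

/-- Modified Bessel function of the second kind,
`K_α(x) = lim_{β→α} (π/2)(I_{−β}(x) − I_β(x))/sin(βπ)`. -/
def besselK (α x : ℝ) : ℝ :=
  limUnder (nhdsWithin α {α}ᶜ) fun β =>
    Real.pi / 2 * (besselI (-β) x - besselI β x) / Real.sin (β * Real.pi)

/-- Normalized K-Bessel function `K̃_α(x) = (x/2)^{-α} K_α(x)`. -/
def besselKt (α x : ℝ) : ℝ := (x / 2) ^ (-α) * besselK α x

/-- Normalized Gegenbauer polynomial `C̃_n^λ = Γ(λ) C_n^λ`, where `C_n^λ` is defined via the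
generating function `(1 − 2xt + t²)^{−λ} = Σ_{n≥0} C_n^λ(x) tⁿ`; explicitly,
`C̃_n^λ(x) = Σ_{k=0}^{⌊n/2⌋} (−1)^k Γ(λ+n−k)/(k!(n−2k)!) (2x)^{n−2k}`.
This expression also gives the limit value `C̃_n^0 = lim_{λ→0+} Γ(λ) C_n^λ` for `n ≥ 1`. -/
def gegenbauerCt (n : ℕ) (l x : ℝ) : ℝ :=
  ∑ k ∈ Finset.range (n / 2 + 1),
    (-1) ^ k * Real.Gamma (l + n - k) / (k.factorial * (n - 2 * k).factorial)
      * (2 * x) ^ (n - 2 * k)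

/-- Laguerre polynomial `L_n^μ(x) = Σ_{k=0}^n (−1)^k binom(n+μ, n−k) x^k/k!`
(with nonnegative integer parameter `μ`). -/
def laguerreL (n μ : ℕ) (x : ℝ) : ℝ :=
  ∑ k ∈ Finset.range (n + 1),
    (-1) ^ k * (Nat.choose (n + μ) (n - k)) * x ^ k / k.factorial

/-- The Euler operator `θ = x d/dx`. -/
def eulerOp (u : ℝ → ℝ) : ℝ → ℝ := fun x => x * deriv u x

/-- `(θ+c)(θ+c+ν)u − x² u`, i.e. the operator `Q_ν(θ+c)` applied to `u`. -/
def besselQ (ν c : ℝ) (u : ℝ → ℝ) : ℝ → ℝ := fun x =>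
  eulerOp (fun y => eulerOp u y + (c + ν) * u y) x
    + c * (eulerOp u x + (c + ν) * u x) - x ^ 2 * u x

/-- The fourth order differential operator
`D_{μ,ν} = x^{−2}((θ+μ)(θ+μ+ν) − x²)(θ(θ+ν) − x²)`. -/
def Dop (μ ν : ℝ) (u : ℝ → ℝ) : ℝ → ℝ := fun x =>
  besselQ ν μ (besselQ ν 0 u) x / x ^ 2

/-- The generating function
`G^{μ,ν}(t,x) = (1−t)^{−(μ+ν+2)/2} Ĩ_{μ/2}(tx/(1−t)) K̃_{ν/2}(x/(1−t))`. -/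
def genFun (μ ν t x : ℝ) : ℝ :=
  (1 - t) ^ (-(μ + ν + 2) / 2) * besselIt (μ / 2) (t * x / (1 - t))
    * besselKt (ν / 2) (x / (1 - t))

/-- The eigenfunctions `Λ_j^{μ,ν}`, defined as the Taylor coefficients in `t` at `t = 0` of the
generating function `G^{μ,ν}(t,x) = Σ_{j≥0} Λ_j^{μ,ν}(x) t^j`. -/
def LambdaF (μ ν : ℝ) (j : ℕ) (x : ℝ) : ℝ :=
  iteratedDeriv j (fun t => genFun μ ν t x) 0 / j.factorial

/-- The integrality condition: `μ ≥ ν ≥ −1` are integers of the same parity,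
not both equal to `−1`. -/
def IntCond (μ ν : ℤ) : Prop :=
  -1 ≤ ν ∧ ν ≤ μ ∧ Even (μ - ν) ∧ ¬(μ = -1 ∧ ν = -1)

end

/-!
Put `α = μ / 2`, `a = ν / 2`, `z = x² / 4` and let `s = -z d/dz`. Dilating `z` by `(1 - t)⁻²` is
`(1 - t) ^ (2 * s)`, and Bessel's equation says that multiplication of `K̃_a` by `z` acts as
`s * (s - a)`. Hence the generating function is
`(1 - t) ^ (-(α + a + 1 - 2 * s)) ₂F₁(s, s - a; α + 1; t²) / Γ(α + 1)` applied to `K̃_a`. The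
coefficient of `t ^ j` in this series is a `₃F₂` polynomial in `s`, as both satisfy the same
three-term recurrence in `j`. Since the rising factorial `(s)_k` sends `K̃_a` to `z ^ k K̃_{a + k}`,
this writes `Λ_j` as a combination of the latter functions.

The Mellin transform of a product of two `K`-Bessel functions is a quotient of Gamma functions, so
the squared norm becomes a double sum over `k, l ≤ j`. The sum over `l` is a `j`-th finite
difference: for `k < j` that of a polynomial of degree less than `j`, which vanishes, and for
`k = j` a partial fraction expansion, which has a closed form.
-/

open scoped ContDiff Polynomial

lemma contDiffOn_infty_of_hasDerivAt_family {ι : Type*} {F : ι → ℝ → ℝ} {σ : ι → ι} {b : ι → ℝ}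
    {u : Set ℝ} (hu : IsOpen u)
    (hF : ∀ i, ∀ x ∈ u, HasDerivAt (F i) (b i * F (σ i) x) x) (i : ι) :
    ContDiffOn ℝ ∞ (F i) u := by
  refine contDiffOn_infty.2 fun n ↦ ?_
  induction n generalizing i with
  | zero => exact contDiffOn_zero.2 fun x hx ↦ (hF i x hx).continuousAt.continuousWithinAt
  | succ n ih =>
    push_cast
    exact (contDiffOn_succ_iff_deriv_of_isOpen hu).2
      ⟨fun x hx ↦ (hF i x hx).differentiableAt.differentiableWithinAt, by simp,
        (contDiffOn_const.mul (ih (σ i))).congr fun x hx ↦ (hF i x hx).deriv⟩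

section CliffordK

/-- The integrand of `cliffordK`. -/
noncomputable def cliffordKernel (p z s : ℝ) : ℝ := s ^ (-p - 1) * exp (-s - z / s)

/-- Twice the Bessel–Clifford function of the second kind: in the variable `z = x² / 4` it is
`2 K̃_p(x)`, see `besselKt_eq_cliffordK`. -/
noncomputable def cliffordK (p z : ℝ) : ℝ := ∫ s in Ioi 0, cliffordKernel p z s

variable {p z s : ℝ}

lemma measurable_cliffordKernel (p z : ℝ) : Measurable (cliffordKernel p z) := by
  unfold cliffordKernel
  fun_prop

lemma cliffordKernel_nonneg (p z : ℝ) (hs : 0 < s) : 0 ≤ cliffordKernel p z s := by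
  unfold cliffordKernel
  positivity

lemma cliffordKernel_antitone (p : ℝ) (hs : 0 < s) : Antitone (cliffordKernel p · s) := by
  intro y z hyz
  simp only [cliffordKernel]
  gcongr

lemma exp_neg_le_factorial_div_pow {x : ℝ} (hx : 0 < x) (n : ℕ) :
    exp (-x) ≤ n.factorial / x ^ n := by
  rw [exp_neg, inv_le_comm₀ (exp_pos x) (by positivity), inv_div]
  exact pow_div_factorial_le_exp x hx.le n

lemma cliffordKernel_le (p : ℝ) (hz : 0 < z) (hs : 0 < s) (n : ℕ) :
    cliffordKernel p z s ≤ n.factorial / z ^ n * (exp (-s) * s ^ (n - p - 1)) := by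
  have hpow : s ^ (n - p - 1) = s ^ (-p - 1) * s ^ n := by
    rw [← rpow_natCast, ← rpow_add hs]
    ring_nf
  calc cliffordKernel p z s = s ^ (-p - 1) * exp (-s) * exp (-(z / s)) := by
        rw [cliffordKernel, sub_eq_add_neg (-s), exp_add, mul_assoc]
    _ ≤ s ^ (-p - 1) * exp (-s) * (n.factorial / (z / s) ^ n) := by
        gcongr
        exact exp_neg_le_factorial_div_pow (by positivity) n
    _ = n.factorial / z ^ n * (exp (-s) * s ^ (n - p - 1)) := by
        rw [hpow, div_pow]
        field_simp

lemma integrableOn_cliffordKernel (p : ℝ) (hz : 0 < z) :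
    IntegrableOn (cliffordKernel p z) (Ioi 0) := by
  obtain ⟨n, hn⟩ := exists_nat_gt p
  refine ((GammaIntegral_convergent (s := n - p) (by linarith)).const_mul
    (n.factorial / z ^ n)).mono' (measurable_cliffordKernel p z).aestronglyMeasurable ?_
  filter_upwards [ae_restrict_mem measurableSet_Ioi] with s hs
  rw [norm_of_nonneg (cliffordKernel_nonneg p z hs)]
  exact cliffordKernel_le p hz hs n

lemma cliffordK_nonneg (p z : ℝ) : 0 ≤ cliffordK p z :=
  setIntegral_nonneg measurableSet_Ioi fun _ hs ↦ cliffordKernel_nonneg p z hs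

lemma hasDerivAt_cliffordKernel (p z : ℝ) (hs : 0 < s) :
    HasDerivAt (cliffordKernel p · s) (-cliffordKernel (p + 1) z s) z := by
  have hexponent : HasDerivAt (fun y ↦ -s - y / s) (-(1 / s)) z :=
    ((hasDerivAt_id z).div_const s).const_sub (-s)
  refine (hexponent.exp.const_mul (s ^ (-p - 1))).congr_deriv ?_
  rw [cliffordKernel, show -(p + 1) - 1 = -p - 1 - 1 by ring, rpow_sub_one hs.ne' (-p - 1)]
  ring

lemma hasDerivAt_cliffordK (p : ℝ) (hz : 0 < z) :
    HasDerivAt (cliffordK p) (-cliffordK (p + 1) z) z := by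
  have h := (hasDerivAt_integral_of_dominated_loc_of_deriv_le
    (μ := volume.restrict (Ioi 0)) (F := cliffordKernel p)
    (F' := fun y s ↦ -cliffordKernel (p + 1) y s) (bound := cliffordKernel (p + 1) (z / 2))
    (Ioi_mem_nhds (half_lt_self hz))
    (.of_forall fun y ↦ (measurable_cliffordKernel p y).aestronglyMeasurable)
    (integrableOn_cliffordKernel p hz)
    (measurable_cliffordKernel (p + 1) z).neg.aestronglyMeasurable ?_
    (integrableOn_cliffordKernel (p + 1) (half_pos hz)) ?_).2
  · rwa [integral_neg] at h
  · filter_upwards [ae_restrict_mem measurableSet_Ioi] with s hs y hy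
    rw [norm_neg, norm_of_nonneg (cliffordKernel_nonneg _ _ hs)]
    exact cliffordKernel_antitone _ hs (le_of_lt hy)
  · filter_upwards [ae_restrict_mem measurableSet_Ioi] with s hs y _
    exact hasDerivAt_cliffordKernel p y hs

lemma contDiffOn_cliffordK (p : ℝ) : ContDiffOn ℝ ∞ (cliffordK p) (Ioi 0) :=
  contDiffOn_infty_of_hasDerivAt_family (σ := (· + 1)) (b := fun _ ↦ -1) isOpen_Ioi
    (fun q z hz ↦ (hasDerivAt_cliffordK q hz).congr_deriv (by simp)) p

lemma integral_comp_div_Ioi_zero (f : ℝ → ℝ) (hz : 0 < z) :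
    ∫ s in Ioi 0, z / s ^ 2 * f (z / s) = ∫ s in Ioi 0, f s := by
  have hinv := integral_comp_rpow_Ioi (fun s ↦ z * f (z * s)) (p := -1) (by norm_num)
  rw [integral_const_mul, integral_comp_mul_left_Ioi _ 0 hz, mul_zero, smul_eq_mul,
    mul_inv_cancel_left₀ hz.ne'] at hinv
  rw [← hinv]
  refine setIntegral_congr_fun measurableSet_Ioi fun s (hs : 0 < s) ↦ ?_
  have hpow : s ^ (-1 - 1 : ℝ) = (s ^ 2)⁻¹ := by
    rw [← rpow_natCast, ← rpow_neg hs.le]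
    norm_num
  simp only [abs_neg, abs_one, one_mul, smul_eq_mul, hpow, rpow_neg_one]
  ring_nf

lemma cliffordK_neg (p : ℝ) (hz : 0 < z) : cliffordK (-p) z = z ^ p * cliffordK p z := by
  rw [cliffordK, cliffordK, ← integral_comp_div_Ioi_zero _ hz, ← integral_const_mul]
  refine setIntegral_congr_fun measurableSet_Ioi fun s (hs : 0 < s) ↦ ?_
  have hexponent : -(z / s) - z / (z / s) = -s - z / s := by
    field_simp
    ring
  have hz_pow : z ^ (- -p - 1) = z ^ p / z := by rw [neg_neg, rpow_sub_one hz.ne']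
  have hs_pow : s ^ (- -p - 1) = (s ^ (-p - 1))⁻¹ / s ^ 2 := by
    rw [← rpow_neg hs.le, ← rpow_natCast, ← rpow_sub hs]
    norm_num
    ring_nf
  simp only [cliffordKernel]
  rw [hexponent, div_rpow hz.le hs.le, hz_pow, hs_pow]
  field_simp

lemma cliffordK_recurrence (p : ℝ) (hz : 0 < z) :
    z * cliffordK (p + 1) z = p * cliffordK p z + cliffordK (p - 1) z := by
  have hsymm : cliffordK (-p) =ᶠ[nhds z] fun y ↦ y ^ p * cliffordK p y := by
    filter_upwards [Ioi_mem_nhds hz] with y hy using cliffordK_neg p hy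
  have hderiv := (hasDerivAt_cliffordK (-p) hz).unique <|
    ((hasDerivAt_rpow_const (p := p) (.inl hz.ne')).mul
      (hasDerivAt_cliffordK p hz)).congr_of_eventuallyEq hsymm
  have hpow : z ^ p = z ^ (p - 1) * z := by rw [rpow_sub_one hz.ne', div_mul_cancel₀ _ hz.ne']
  rw [show -p + 1 = -(p - 1) by ring, cliffordK_neg _ hz, hpow] at hderiv
  refine mul_left_cancel₀ (rpow_pos_of_pos hz (p - 1)).ne' ?_
  linarith

lemma tendsto_cliffordK_nhdsGT_zero (hp : p < 0) :
    Tendsto (cliffordK p) (nhdsWithin 0 (Ioi 0)) (nhds (Gamma (-p))) := by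
  rw [Gamma_eq_integral (neg_pos.2 hp)]
  refine tendsto_integral_filter_of_dominated_convergence (fun s ↦ exp (-s) * s ^ (-p - 1))
    (.of_forall fun z ↦ (measurable_cliffordKernel p z).aestronglyMeasurable) ?_
    (GammaIntegral_convergent (neg_pos.2 hp)) ?_
  · filter_upwards [self_mem_nhdsWithin] with z (hz : 0 < z)
    filter_upwards [ae_restrict_mem measurableSet_Ioi] with s (hs : 0 < s)
    rw [norm_of_nonneg (cliffordKernel_nonneg _ _ hs)]
    simpa [cliffordKernel, mul_comm] using cliffordKernel_antitone p hs hz.le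
  · filter_upwards [ae_restrict_mem measurableSet_Ioi] with s (hs : 0 < s)
    have h := (hasDerivAt_cliffordKernel p 0 hs).continuousAt.tendsto
    simp only [cliffordKernel, zero_div, sub_zero, mul_comm (s ^ (-p - 1))] at h ⊢
    exact h.mono_left nhdsWithin_le_nhds

lemma rpow_le_rpow_add_rpow {p q r : ℝ} (hs : 0 < s) (hp : p ≤ q) (hr : q ≤ r) :
    s ^ q ≤ s ^ p + s ^ r := by
  rcases le_total s 1 with h | h
  · exact (rpow_le_rpow_of_exponent_ge hs h hp).trans
      (le_add_of_nonneg_right (rpow_nonneg hs.le r))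
  · exact (rpow_le_rpow_of_exponent_le h hr).trans
      (le_add_of_nonneg_left (rpow_nonneg hs.le p))

lemma continuous_cliffordK_left (hz : 0 < z) : Continuous (cliffordK · z) := by
  refine continuous_iff_continuousAt.2 fun p ↦ continuousAt_of_dominated
    (bound := fun s ↦ cliffordKernel (p + 1) z s + cliffordKernel (p - 1) z s)
    (.of_forall fun q ↦ (measurable_cliffordKernel q z).aestronglyMeasurable) ?_
    ((integrableOn_cliffordKernel _ hz).add (integrableOn_cliffordKernel _ hz)) ?_
  · filter_upwards [Ioo_mem_nhds (sub_one_lt p) (lt_add_one p)] with q hq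
    filter_upwards [ae_restrict_mem measurableSet_Ioi] with s (hs : 0 < s)
    rw [norm_of_nonneg (cliffordKernel_nonneg _ _ hs)]
    simp only [cliffordKernel, ← add_mul]
    gcongr
    exact rpow_le_rpow_add_rpow hs (by linarith [hq.2]) (by linarith [hq.1])
  · filter_upwards [ae_restrict_mem measurableSet_Ioi] with s (hs : 0 < s)
    simp only [cliffordKernel]
    exact ((continuousAt_const_rpow hs.ne').comp (by fun_prop)).mul continuousAt_const

end CliffordK

section EntirePowerSeries

variable {c : ℕ → ℝ} (hc : ∀ z, Summable fun m ↦ c m * z ^ m)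
include hc

lemma summable_succ_mul_coeff (z : ℝ) : Summable fun m : ℕ ↦ (m + 1) * c (m + 1) * z ^ m := by
  set R := |z| + 1
  have hR : 1 ≤ R := le_add_of_nonneg_left (abs_nonneg z)
  have hmajor : Summable fun m ↦ |c (m + 1) * (2 * R) ^ (m + 1)| :=
    ((summable_nat_add_iff 1).2 (hc (2 * R))).abs
  refine hmajor.of_norm_bounded fun m ↦ ?_
  have hm : ((m + 1 : ℕ) : ℝ) ≤ 2 ^ (m + 1) := by exact_mod_cast Nat.lt_two_pow_self.le
  have hpow : |z| ^ m ≤ R ^ (m + 1) :=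
    (pow_le_pow_left₀ (abs_nonneg z) (by simp [R]) m).trans (pow_le_pow_right₀ hR m.le_succ)
  calc ‖(m + 1) * c (m + 1) * z ^ m‖ = |c (m + 1)| * (((m + 1 : ℕ) : ℝ) * |z| ^ m) := by
        rw [norm_mul, norm_mul, norm_pow, norm_of_nonneg (by positivity : (0 : ℝ) ≤ m + 1)]
        push_cast [norm_eq_abs]
        ring
    _ ≤ |c (m + 1)| * (2 ^ (m + 1) * R ^ (m + 1)) := by gcongr
    _ = |c (m + 1) * (2 * R) ^ (m + 1)| := by
        rw [abs_mul, abs_of_nonneg (by positivity : 0 ≤ (2 * R) ^ (m + 1)), mul_pow]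

lemma hasDerivAt_tsum_mul_pow (z : ℝ) :
    HasDerivAt (fun y ↦ ∑' m, c m * y ^ m) (∑' m : ℕ, (m + 1) * c (m + 1) * z ^ m) z := by
  set R := |z| + 1
  have hR : 0 < R := by positivity
  have hsucc := summable_succ_mul_coeff hc
  have hbound : Summable fun m : ℕ ↦ |c m| * (m * R ^ (m - 1)) := by
    refine (summable_nat_add_iff 1).1 ((hsucc R).abs.congr fun m ↦ ?_)
    rw [abs_mul, abs_mul, abs_of_nonneg (by positivity : (0 : ℝ) ≤ m + 1),
      abs_of_nonneg (by positivity : 0 ≤ R ^ m)]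
    push_cast
    ring_nf
  have hderiv := hasDerivAt_tsum_of_isPreconnected (y₀ := 0) (y := z)
    (g := fun m y ↦ c m * y ^ m) (g' := fun m y ↦ c m * (m * y ^ (m - 1)))
    hbound isOpen_ball (convex_ball 0 R).isPreconnected
    (fun m y _ ↦ (hasDerivAt_pow m y).const_mul _) (fun m y hy ↦ ?_) (by simp [hR])
    (hc 0) (by simp [R])
  · refine hderiv.congr_deriv ?_
    have hshift : (fun m : ℕ ↦ c (m + 1) * (((m + 1 : ℕ) : ℝ) * z ^ (m + 1 - 1)))
        = fun m : ℕ ↦ (m + 1) * c (m + 1) * z ^ m := by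
      ext m
      push_cast [Nat.add_sub_cancel]
      ring
    rw [Summable.tsum_eq_zero_add ((summable_nat_add_iff 1).1 (hshift ▸ hsucc z)), hshift]
    simp
  · have hy : |y| ≤ R := (mem_ball_zero_iff.1 hy).le
    rw [norm_mul, norm_mul, norm_pow, norm_eq_abs, norm_eq_abs, norm_eq_abs, Nat.abs_cast]
    gcongr

lemma contDiff_tsum_mul_pow : ContDiff ℝ ∞ fun y ↦ ∑' m, c m * y ^ m :=
  contDiffOn_univ.1 <| contDiffOn_infty_of_hasDerivAt_family (b := fun _ ↦ 1)
    (ι := {c : ℕ → ℝ // ∀ z, Summable fun m ↦ c m * z ^ m})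
    (F := fun c y ↦ ∑' m, c.1 m * y ^ m)
    (σ := fun c ↦ ⟨fun m ↦ (m + 1) * c.1 (m + 1), summable_succ_mul_coeff c.2⟩) isOpen_univ
    (fun c z _ ↦ (hasDerivAt_tsum_mul_pow c.2 z).congr_deriv (one_mul _).symm) ⟨c, hc⟩

lemma summable_coeff_add_mul_pow (M : ℕ) (z : ℝ) : Summable fun m ↦ c (m + M) * z ^ m := by
  rcases eq_or_ne z 0 with rfl | hz
  · exact (summable_nat_add_iff 1).1 (by simp)
  · refine (((summable_nat_add_iff M).2 (hc z)).mul_right (z ^ M)⁻¹).congr fun m ↦ ?_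
    rw [pow_add]
    field_simp

lemma tsum_mul_pow_eq_sum_add (M : ℕ) (z : ℝ) :
    ∑' m, c m * z ^ m
      = ∑ m ∈ Finset.range M, c m * z ^ m + z ^ M * ∑' m, c (m + M) * z ^ m := by
  rw [← (hc z).sum_add_tsum_nat_add M, ← tsum_mul_left]
  congr 2 with m
  ring

omit hc in
lemma iteratedDeriv_pow_mul_zero_div_factorial {f : ℝ → ℝ} {j : ℕ} (hf : ContDiffAt ℝ j f 0)
    (N : ℕ) :
    iteratedDeriv j (fun t ↦ t ^ N * f t) 0 / j.factorial
      = if N ≤ j then iteratedDeriv (j - N) f 0 / (j - N).factorial else 0 := by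
  rw [iteratedDeriv_fun_mul (by fun_prop) hf]
  simp only [iteratedDeriv_fun_pow_zero]
  split_ifs with hN
  · rw [Finset.sum_eq_single_of_mem N (Finset.mem_range.2 (by omega)) fun b _ hb ↦ by simp [hb],
      if_pos rfl, Nat.choose_eq_factorial_div_factorial hN,
      Nat.cast_div (Nat.factorial_mul_factorial_dvd_factorial hN) (by positivity)]
    push_cast
    field_simp
  · rw [Finset.sum_eq_zero fun i hi ↦ by
      rw [if_neg (by have := Finset.mem_range.1 hi; omega)]
      simp, zero_div]

lemma iteratedDeriv_tsum_mul_zero_div_factorial {w g : ℝ → ℝ} {j : ℕ}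
    (hw : ContDiffAt ℝ j w 0) (hg : ContDiffAt ℝ j g 0) :
    iteratedDeriv j (fun t ↦ (∑' m, c m * (t ^ 2 * w t) ^ m) * g t) 0 / j.factorial
      = ∑ m ∈ Finset.range (j / 2 + 1), c m *
          (iteratedDeriv (j - 2 * m) (fun t ↦ w t ^ m * g t) 0 / (j - 2 * m).factorial) := by
  set M := j / 2 + 1
  let tail (t : ℝ) : ℝ := w t ^ M * ((∑' m, c (m + M) * (t ^ 2 * w t) ^ m) * g t)
  have htail : ContDiffAt ℝ j tail 0 :=
    have hseries := contDiff_tsum_mul_pow (summable_coeff_add_mul_pow hc M)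
    (hw.pow M).mul <| .mul ((hseries.contDiffAt.of_le (mod_cast le_top)).comp (0 : ℝ)
      ((contDiffAt_id.pow 2).mul hw)) hg
  have hremainder : ContDiffAt ℝ j (fun t ↦ t ^ (2 * M) * tail t) 0 :=
    (contDiffAt_id.pow _).mul htail
  have hterm (m : ℕ) : ContDiffAt ℝ j (fun t ↦ w t ^ m * g t) 0 := (hw.pow m).mul hg
  have hsplit : (fun t ↦ (∑' m, c m * (t ^ 2 * w t) ^ m) * g t) = fun t ↦
      ∑ m ∈ Finset.range M, c m * (t ^ (2 * m) * (w t ^ m * g t)) + t ^ (2 * M) * tail t := by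
    ext t
    rw [tsum_mul_pow_eq_sum_add hc M, add_mul, Finset.sum_mul]
    simp only [tail, mul_pow, pow_mul]
    congr 1
    · exact Finset.sum_congr rfl fun m _ ↦ by ring
    · ring
  have hmonomial (m : ℕ) : ContDiffAt ℝ j (fun t ↦ c m * (t ^ (2 * m) * (w t ^ m * g t))) 0 :=
    contDiffAt_const.mul ((contDiffAt_id.pow _).mul (hterm m))
  rw [hsplit, iteratedDeriv_fun_add (.sum fun m _ ↦ hmonomial m) hremainder,
    iteratedDeriv_fun_sum fun m _ ↦ hmonomial m, add_div,
    iteratedDeriv_pow_mul_zero_div_factorial htail, if_neg (by omega), add_zero, Finset.sum_div]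
  refine Finset.sum_congr rfl fun m hm ↦ ?_
  rw [iteratedDeriv_const_mul_field, mul_div_assoc,
    iteratedDeriv_pow_mul_zero_div_factorial (hterm m),
    if_pos (by have := Finset.mem_range.1 hm; omega)]

end EntirePowerSeries

section CliffordI

lemma inv_Gamma_eq_mul_inv_Gamma_add_one (s : ℝ) : (Gamma s)⁻¹ = s * (Gamma (s + 1))⁻¹ := by
  rcases eq_or_ne s 0 with rfl | hs
  · simp
  · rw [Gamma_add_one hs, mul_inv, mul_inv_cancel_left₀ hs]

/-- The coefficients of `cliffordI`. -/
noncomputable def cliffordCoeff (β : ℝ) (m : ℕ) : ℝ := ((m.factorial : ℝ) * Gamma (m + β + 1))⁻¹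

/-- The Bessel–Clifford function of the first kind, normalized so that `Ĩ_β(x)` is its value at
`x² / 4`. -/
noncomputable def cliffordI (β z : ℝ) : ℝ := ∑' m, cliffordCoeff β m * z ^ m

lemma succ_mul_cliffordCoeff_succ (β : ℝ) (m : ℕ) :
    (m + 1) * cliffordCoeff β (m + 1) = cliffordCoeff (β + 1) m := by
  simp only [cliffordCoeff, Nat.factorial_succ, mul_inv]
  push_cast
  rw [show (m : ℝ) + 1 + β + 1 = m + (β + 1) + 1 by ring]
  field_simp

lemma cliffordCoeff_sub_one (β : ℝ) (m : ℕ) :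
    cliffordCoeff (β - 1) m = (m + β) * cliffordCoeff β m := by
  simp only [cliffordCoeff, mul_inv]
  rw [show (m : ℝ) + (β - 1) + 1 = m + β by ring, inv_Gamma_eq_mul_inv_Gamma_add_one (m + β)]
  ring

lemma summable_cliffordCoeff_mul_pow (β z : ℝ) : Summable fun m ↦ cliffordCoeff β m * z ^ m := by
  refine (summable_pow_div_factorial |z|).of_norm_bounded_eventually_nat ?_
  obtain ⟨M, hM⟩ := exists_nat_ge (1 - β)
  filter_upwards [eventually_ge_atTop M] with m hm
  have hm' : (M : ℝ) ≤ m := by exact_mod_cast hm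
  have hGamma : 1 ≤ Gamma (m + β + 1) := by
    simpa using Gamma_strictMonoOn_Ici.monotoneOn (a := 2) (b := m + β + 1) (by simp)
      (by simp only [mem_Ici]; linarith) (by linarith)
  rw [cliffordCoeff, norm_mul, norm_pow, mul_inv, norm_of_nonneg (by positivity), norm_eq_abs,
    div_eq_inv_mul]
  gcongr
  exact mul_le_of_le_one_right (by positivity) (inv_le_one_of_one_le₀ hGamma)

lemma cliffordI_zero (β : ℝ) : cliffordI β 0 = (Gamma (β + 1))⁻¹ := by
  rw [cliffordI, tsum_eq_single 0 fun m hm ↦ by simp [hm]]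
  simp [cliffordCoeff]

lemma hasDerivAt_cliffordI (β z : ℝ) : HasDerivAt (cliffordI β) (cliffordI (β + 1) z) z := by
  have h := hasDerivAt_tsum_mul_pow (summable_cliffordCoeff_mul_pow β) z
  simp only [succ_mul_cliffordCoeff_succ] at h
  exact h

lemma cliffordI_recurrence (β z : ℝ) :
    cliffordI (β - 1) z = z * cliffordI (β + 1) z + β * cliffordI β z := by
  have hshift : Summable fun m : ℕ ↦ m * cliffordCoeff β m * z ^ m := by
    refine (summable_nat_add_iff 1).1
      (((summable_cliffordCoeff_mul_pow (β + 1) z).mul_left z).congr fun m ↦ ?_)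
    rw [← succ_mul_cliffordCoeff_succ]
    push_cast
    ring
  have hz : z * cliffordI (β + 1) z = ∑' m : ℕ, m * cliffordCoeff β m * z ^ m := by
    rw [hshift.tsum_eq_zero_add, cliffordI, ← tsum_mul_left]
    simp only [← succ_mul_cliffordCoeff_succ]
    push_cast
    simp only [zero_mul, zero_add]
    exact tsum_congr fun m ↦ by ring
  rw [hz, cliffordI, cliffordI, ← tsum_mul_left,
    ← hshift.tsum_add ((summable_cliffordCoeff_mul_pow β z).mul_left β)]
  refine tsum_congr fun m ↦ ?_
  rw [cliffordCoeff_sub_one]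
  ring

end CliffordI

section ConnectionFormula

lemma eqOn_Ioi_of_hasDerivAt_zero {f : ℝ → ℝ} {l : ℝ} (hf : ∀ z, 0 < z → HasDerivAt f 0 z)
    (hlim : Tendsto f (nhdsWithin 0 (Ioi 0)) (nhds l)) {z : ℝ} (hz : 0 < z) : f z = l := by
  have hconst (y : ℝ) (hy : 0 < y) : f y = f z :=
    isOpen_Ioi.is_const_of_deriv_eq_zero isPreconnected_Ioi
      (fun y hy ↦ (hf y hy).differentiableAt.differentiableWithinAt) (fun y hy ↦ (hf y hy).deriv)
      hy hz
  refine tendsto_nhds_unique (tendsto_const_nhds.congr' ?_) hlim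
  filter_upwards [self_mem_nhdsWithin] with y hy using (hconst y hy).symm

/-- The Wronskian of `cliffordI β` and `z ^ (-β) * cliffordK (-β) z`, up to a power of `z`. -/
noncomputable def wronskianIK (β z : ℝ) : ℝ :=
  cliffordI β z * cliffordK (-β - 1) z + z * cliffordI (β + 1) z * cliffordK (-β) z

variable {z : ℝ}

lemma wronskianIK_sub_one (β : ℝ) (hz : 0 < z) : wronskianIK (β - 1) z = wronskianIK β z := by
  have hK := cliffordK_recurrence (-β) hz
  simp only [wronskianIK, cliffordI_recurrence β z]
  rw [show β - 1 + 1 = β by ring, show -(β - 1) - 1 = -β by ring, show -(β - 1) = -β + 1 by ring]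
  linear_combination cliffordI β z * hK

lemma hasDerivAt_wronskianIK (β : ℝ) (hz : 0 < z) : HasDerivAt (wronskianIK β) 0 z := by
  have h := ((hasDerivAt_cliffordI β z).mul (hasDerivAt_cliffordK (-β - 1) hz)).add
    (((hasDerivAt_id z).mul (hasDerivAt_cliffordI (β + 1) z)).mul (hasDerivAt_cliffordK (-β) hz))
  refine h.congr_deriv ?_
  have hI := cliffordI_recurrence (β + 1) z
  have hK := cliffordK_recurrence (-β) hz
  simp only [id, Pi.mul_apply, show -β - 1 + 1 = -β by ring, show β + 1 - 1 = β by ring] at *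
  linear_combination -(cliffordK (-β) z) * hI - cliffordI (β + 1) z * hK

lemma tendsto_wronskianIK_nhdsGT_zero {β : ℝ} (hβ : 0 < β) :
    Tendsto (wronskianIK β) (nhdsWithin 0 (Ioi 0)) (nhds 1) := by
  have hI (γ : ℝ) : Tendsto (cliffordI γ) (nhdsWithin 0 (Ioi 0)) (nhds (cliffordI γ 0)) :=
    (hasDerivAt_cliffordI γ 0).continuousAt.tendsto.mono_left nhdsWithin_le_nhds
  have hid : Tendsto id (nhdsWithin 0 (Ioi 0)) (nhds (0 : ℝ)) := nhdsWithin_le_nhds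
  have h := ((hI β).mul (tendsto_cliffordK_nhdsGT_zero (p := -β - 1) (by linarith))).add
    ((hid.mul (hI (β + 1))).mul (tendsto_cliffordK_nhdsGT_zero (p := -β) (by linarith)))
  rwa [cliffordI_zero, show -(-β - 1) = β + 1 by ring, zero_mul, zero_mul, add_zero,
    inv_mul_cancel₀ (Gamma_pos_of_pos (by linarith)).ne'] at h

lemma wronskianIK_eq_one (β : ℝ) (hz : 0 < z) : wronskianIK β z = 1 := by
  have hshift (n : ℕ) : wronskianIK (β + n) z = wronskianIK β z := by
    induction n with
    | zero => simp
    | succ n ih => rw [← ih, ← wronskianIK_sub_one (β + (n + 1 : ℕ)) hz]; push_cast; ring_nf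
  obtain ⟨n, hn⟩ := exists_nat_gt (-β)
  rw [← hshift n]
  exact eqOn_Ioi_of_hasDerivAt_zero (fun y hy ↦ hasDerivAt_wronskianIK _ hy)
    (tendsto_wronskianIK_nhdsGT_zero (by linarith)) hz

/-- The Wronskian of `cliffordI β` and `z ^ (-β) * cliffordI (-β) z`, up to a power of `z`. -/
noncomputable def wronskianII (β z : ℝ) : ℝ :=
  cliffordI β z * cliffordI (-β - 1) z - z * cliffordI (β + 1) z * cliffordI (-β) z

lemma hasDerivAt_wronskianII (β z : ℝ) : HasDerivAt (wronskianII β) 0 z := by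
  have h := ((hasDerivAt_cliffordI β z).mul (hasDerivAt_cliffordI (-β - 1) z)).sub
    (((hasDerivAt_id z).mul (hasDerivAt_cliffordI (β + 1) z)).mul (hasDerivAt_cliffordI (-β) z))
  refine h.congr_deriv ?_
  have hI := cliffordI_recurrence (β + 1) z
  have hI' := cliffordI_recurrence (-β) z
  simp only [id, Pi.mul_apply, show -β - 1 + 1 = -β by ring, show β + 1 - 1 = β by ring] at *
  linear_combination cliffordI (-β) z * hI + cliffordI (β + 1) z * hI'

lemma pi_mul_wronskianII (β z : ℝ) : π * wronskianII β z = -sin (π * β) := by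
  have hconst : wronskianII β z = wronskianII β 0 :=
    is_const_of_deriv_eq_zero (fun y ↦ (hasDerivAt_wronskianII β y).differentiableAt)
      (fun y ↦ (hasDerivAt_wronskianII β y).deriv) z 0
  have hreflect : Gamma (β + 1) * Gamma (-β) = -(π / sin (π * β)) := by
    have h := Gamma_mul_Gamma_one_sub (β + 1)
    rwa [show 1 - (β + 1) = -β by ring, mul_add, mul_one, sin_add_pi, div_neg] at h
  rw [hconst, wronskianII, cliffordI_zero, cliffordI_zero, show -β - 1 + 1 = -β by ring, zero_mul,
    zero_mul, sub_zero, ← mul_inv, hreflect, inv_neg, inv_div, mul_neg,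
    mul_div_cancel₀ _ pi_ne_zero]

lemma sin_mul_cliffordK (β : ℝ) (hz : 0 < z) :
    sin (π * β) * cliffordK β z = π * (z ^ (-β) * cliffordI (-β) z - cliffordI β z) := by
  have hpow : z ^ (-β) * z ^ β = 1 := by rw [← rpow_add hz, neg_add_cancel, rpow_zero]
  have hII := pi_mul_wronskianII β z
  -- Eliminating `cliffordK (β + 1) z` from these two relations leaves `wronskianII β z`.
  have hIK := wronskianIK_eq_one β hz
  have hIK' := wronskianIK_eq_one (-β - 1) hz
  rw [wronskianIK, cliffordK_neg β hz, show -β - 1 = -(β + 1) by ring, cliffordK_neg _ hz,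
    rpow_add_one hz.ne'] at hIK
  rw [wronskianIK, show -(-β - 1) - 1 = β by ring, show -β - 1 + 1 = -β by ring,
    show -(-β - 1) = β + 1 by ring] at hIK'
  rw [wronskianII] at hII
  linear_combination cliffordK β z * hII - π * cliffordI β z * hIK'
    + π * z ^ (-β) * cliffordI (-β) z * hIK
    - π * z * cliffordI (-β) z * (cliffordI β z * cliffordK (β + 1) z
      + cliffordI (β + 1) z * cliffordK β z) * hpow

end ConnectionFormula

section BesselFunctions

lemma eventually_sin_mul_pi_ne_zero (a : ℝ) :
    ∀ᶠ β in nhdsWithin a {a}ᶜ, sin (β * π) ≠ 0 := by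
  have hderiv : HasDerivAt (fun β ↦ sin (β * π)) (cos (a * π) * π) a := by
    simpa using ((hasDerivAt_id a).mul_const π).sin
  by_cases hsin : sin (a * π) = 0
  · refine hderiv.eventually_ne (mul_ne_zero (fun hcos ↦ ?_) pi_ne_zero)
    simpa [hsin, hcos] using sin_sq_add_cos_sq (a * π)
  · exact nhdsWithin_le_nhds (hderiv.continuousAt.eventually_ne hsin)

lemma besselIt_eq_cliffordI (α x : ℝ) : besselIt α x = cliffordI α (x ^ 2 / 4) := by
  refine tsum_congr fun m ↦ ?_
  rw [cliffordCoeff, pow_mul, div_pow]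
  norm_num
  ring

variable {x : ℝ}

lemma besselI_eq_cliffordI (α : ℝ) (hx : 0 < x) :
    besselI α x = (x / 2) ^ α * cliffordI α (x ^ 2 / 4) := by
  rw [← besselIt_eq_cliffordI, besselIt, ← tsum_mul_left]
  refine tsum_congr fun m ↦ ?_
  rw [rpow_add (half_pos hx), ← rpow_natCast]
  push_cast
  ring

lemma besselK_eq_cliffordK (a : ℝ) (hx : 0 < x) :
    besselK a x = (x / 2) ^ a * cliffordK a (x ^ 2 / 4) / 2 := by
  have hz : 0 < x ^ 2 / 4 := by positivity
  have hcont : Continuous fun β ↦ (x / 2) ^ β * cliffordK β (x ^ 2 / 4) / 2 :=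
    ((continuous_const_rpow (half_pos hx).ne').mul (continuous_cliffordK_left hz)).div_const 2
  refine ((hcont.tendsto a).mono_left nhdsWithin_le_nhds |>.congr' ?_).limUnder_eq
  filter_upwards [eventually_sin_mul_pi_ne_zero a] with β hsin
  have hpow : (x ^ 2 / 4) ^ (-β) = (x / 2) ^ (-β) * (x / 2) ^ (-β) := by
    rw [← mul_rpow (half_pos hx).le (half_pos hx).le]
    ring_nf
  have hcancel : (x / 2) ^ β * (x / 2) ^ (-β) = 1 := by
    rw [← rpow_add (half_pos hx), add_neg_cancel, rpow_zero]
  have hconnection := sin_mul_cliffordK β hz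
  rw [hpow, mul_comm π β] at hconnection
  rw [besselI_eq_cliffordI _ hx, besselI_eq_cliffordI _ hx, eq_div_iff hsin]
  linear_combination (x / 2) ^ β / 2 * hconnection
    + π / 2 * (x / 2) ^ (-β) * cliffordI (-β) (x ^ 2 / 4) * hcancel

lemma besselKt_eq_cliffordK (a : ℝ) (hx : 0 < x) :
    besselKt a x = cliffordK a (x ^ 2 / 4) / 2 := by
  rw [besselKt, besselK_eq_cliffordK _ hx, ← mul_div_assoc, ← mul_assoc, ← rpow_add (half_pos hx),
    neg_add_cancel, rpow_zero, one_mul]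

lemma genFun_eq_cliffordI_mul_cliffordK (μ ν : ℝ) {t : ℝ} (hx : 0 < x) (ht : t < 1) :
    genFun μ ν t x = (1 - t) ^ (-(μ / 2 + ν / 2 + 1))
      * cliffordI (μ / 2) (t ^ 2 * (x ^ 2 / 4 / (1 - t) ^ 2))
      * (cliffordK (ν / 2) (x ^ 2 / 4 / (1 - t) ^ 2) / 2) := by
  have ht' : 0 < 1 - t := sub_pos.2 ht
  rw [genFun, besselIt_eq_cliffordI, besselKt_eq_cliffordK _ (div_pos hx ht')]
  congr 3
  · ring
  · field_simp
  · field_simp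

end BesselFunctions

section EulerCalculus

open Polynomial

/-- `p(-θ)` applied to `cliffordK a`, evaluated at `z`, as a linear function of the polynomial `p`.
Up to Gamma factors, `p(-θ)` multiplies the Mellin transform of a function by `p`. -/
noncomputable def eulerPolyK (a z : ℝ) : ℝ[X] →ₗ[ℝ] ℝ :=
  lsum fun n ↦ LinearMap.toSpanSingleton ℝ ℝ ((-1) ^ n * eulerOp^[n] (cliffordK a) z)

variable {a z : ℝ}

lemma contDiffOn_iterate_eulerOp {u : ℝ → ℝ} (hu : ContDiffOn ℝ ∞ u (Ioi 0)) (n : ℕ) :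
    ContDiffOn ℝ ∞ (eulerOp^[n] u) (Ioi 0) := by
  induction n with
  | zero => exact hu
  | succ n ih =>
    rw [Function.iterate_succ_apply']
    exact contDiffOn_id.mul ((contDiffOn_infty_iff_deriv_of_isOpen isOpen_Ioi).1 ih).2

lemma eulerPolyK_monomial (a z : ℝ) (n : ℕ) (c : ℝ) :
    eulerPolyK a z (monomial n c) = c * ((-1) ^ n * eulerOp^[n] (cliffordK a) z) := by
  simp [eulerPolyK, lsum_apply]

lemma eulerPolyK_C_mul (a z c : ℝ) (p : ℝ[X]) :
    eulerPolyK a z (C c * p) = c * eulerPolyK a z p := by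
  rw [← smul_eq_C_mul, map_smul, smul_eq_mul]

lemma hasDerivAt_eulerPolyK (a : ℝ) (p : ℝ[X]) (hz : 0 < z) :
    HasDerivAt (eulerPolyK a · p) (-(eulerPolyK a z (X * p)) / z) z := by
  induction p using Polynomial.induction_on' with
  | add p q hp hq =>
    simp only [map_add, mul_add]
    refine (hp.add hq).congr_deriv ?_
    ring
  | monomial n c =>
    simp only [X_mul_monomial, eulerPolyK_monomial, Function.iterate_succ_apply', eulerOp]
    have hiterate := ((contDiffOn_iterate_eulerOp (contDiffOn_cliffordK a) n).contDiffAt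
      (Ioi_mem_nhds hz)).differentiableAt (by simp)
    refine ((hiterate.hasDerivAt.const_mul ((-1) ^ n)).const_mul c).congr_deriv ?_
    field_simp
    ring

lemma eulerPolyK_X_mul {p : ℝ[X]} {f : ℝ → ℝ} {f' : ℝ} (hz : 0 < z)
    (hpf : ∀ y, 0 < y → eulerPolyK a y p = f y) (hf : HasDerivAt f f' z) :
    eulerPolyK a z (X * p) = -z * f' := by
  have hfp : f =ᶠ[nhds z] (eulerPolyK a · p) := by
    filter_upwards [Ioi_mem_nhds hz] with y hy using (hpf y hy).symm
  rw [← ((hasDerivAt_eulerPolyK a p hz).congr_of_eventuallyEq hfp).unique hf]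
  field_simp

lemma eulerPolyK_one (a z : ℝ) : eulerPolyK a z 1 = cliffordK a z := by
  simpa using eulerPolyK_monomial a z 0 1

lemma hasDerivAt_pow_mul_cliffordK (k : ℕ) (a : ℝ) (hz : 0 < z) :
    HasDerivAt (fun y ↦ y ^ k * cliffordK a y)
      ((k * (z ^ k * cliffordK a z) - z ^ (k + 1) * cliffordK (a + 1) z) / z) z := by
  refine ((hasDerivAt_pow k z).mul (hasDerivAt_cliffordK a hz)).congr_deriv ?_
  rcases k with - | k
  · field_simp
    simp
  · field_simp
    simp
    ring

lemma eulerPolyK_ascPochhammer (a : ℝ) (k : ℕ) (hz : 0 < z) :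
    eulerPolyK a z (ascPochhammer ℝ k) = z ^ k * cliffordK (a + k) z := by
  induction k generalizing z with
  | zero => simp [eulerPolyK_one]
  | succ k ih =>
    have hX := eulerPolyK_X_mul hz (fun y hy ↦ ih hy) (hasDerivAt_pow_mul_cliffordK k (a + k) hz)
    rw [ascPochhammer_succ_right, mul_add, mul_comm _ X, map_add, hX, mul_comm _ (k : ℝ[X]),
      ← C_eq_natCast, eulerPolyK_C_mul, ih hz, neg_mul, mul_div_cancel₀ _ hz.ne']
    push_cast
    rw [add_assoc]
    ring

lemma ascPochhammer_succ_comp (p : ℝ[X]) (m : ℕ) :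
    (ascPochhammer ℝ (m + 1)).comp p = (ascPochhammer ℝ m).comp p * (p + m) := by
  simp [ascPochhammer_succ_right]

lemma eulerPolyK_ascPochhammer_mul_comp (a : ℝ) (m : ℕ) (hz : 0 < z) :
    eulerPolyK a z (ascPochhammer ℝ m * (ascPochhammer ℝ m).comp (X - C a))
      = z ^ m * cliffordK a z := by
  induction m generalizing z with
  | zero => simp [eulerPolyK_one]
  | succ m ih =>
    set p := ascPochhammer ℝ m * (ascPochhammer ℝ m).comp (X - C a)
    have hstep {y : ℝ} (hy : 0 < y) :
        eulerPolyK a y (X * p + C (m : ℝ) * p) = y ^ (m + 1) * cliffordK (a + 1) y := by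
      rw [map_add, eulerPolyK_C_mul, ih hy, eulerPolyK_X_mul hy (fun y hy ↦ ih hy)
        (hasDerivAt_pow_mul_cliffordK m a hy), neg_mul, mul_div_cancel₀ _ hy.ne']
      ring
    have hsucc : ascPochhammer ℝ (m + 1) * (ascPochhammer ℝ (m + 1)).comp (X - C a)
        = X * (X * p + C (m : ℝ) * p) + C (m - a) * (X * p + C (m : ℝ) * p) := by
      rw [ascPochhammer_succ_comp, ascPochhammer_succ_right, C_sub, C_eq_natCast]
      ring
    have hK := cliffordK_recurrence (a + 1) hz
    rw [hsucc, map_add, eulerPolyK_C_mul, hstep hz, eulerPolyK_X_mul hz (fun y hy ↦ hstep hy)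
      (hasDerivAt_pow_mul_cliffordK (m + 1) (a + 1) hz), neg_mul, mul_div_cancel₀ _ hz.ne']
    rw [show a + 1 - 1 = a by ring] at hK
    push_cast
    linear_combination z ^ (m + 1) * hK

/-- The shape in which the terms of the expansion of `genFun` in powers of `t²` depend on `t`. -/
noncomputable def dilatedEulerPolyK (a z B : ℝ) (p : ℝ[X]) (t : ℝ) : ℝ :=
  (1 - t) ^ (-B) * eulerPolyK a (z / (1 - t) ^ 2) p

variable {t : ℝ}

lemma hasDerivAt_dilatedEulerPolyK (a B : ℝ) (p : ℝ[X]) (hz : 0 < z) (ht : t < 1) :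
    HasDerivAt (dilatedEulerPolyK a z B p)
      (dilatedEulerPolyK a z (B + 1) (p * (C B - 2 * X)) t) t := by
  have ht' : 0 < 1 - t := sub_pos.2 ht
  have hsub : HasDerivAt (fun t : ℝ ↦ 1 - t) (-1) t := (hasDerivAt_id t).const_sub 1
  have harg : HasDerivAt (fun t ↦ z / (1 - t) ^ 2) (2 * (z / (1 - t) ^ 2) / (1 - t)) t := by
    refine ((hasDerivAt_const t z).div (hsub.fun_pow 2) (by positivity)).congr_deriv ?_
    field_simp
    ring
  have hcomp := (hasDerivAt_eulerPolyK a p (z := z / (1 - t) ^ 2) (by positivity)).comp t harg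
  refine ((hsub.rpow_const (p := -B) (.inl ht'.ne')).mul hcomp).congr_deriv ?_
  have hp : p * (C B - 2 * X) = C B * p + C (-2) * (X * p) := by
    simp only [C_neg, C_ofNat]
    ring
  have hpow : (1 - t) ^ (-B) = (1 - t) ^ (-B - 1) * (1 - t) := by
    rw [rpow_sub_one ht'.ne', div_mul_cancel₀ _ ht'.ne']
  rw [dilatedEulerPolyK, hp, map_add, eulerPolyK_C_mul, eulerPolyK_C_mul, neg_add', hpow,
    Function.comp_apply]
  field_simp

lemma contDiffOn_dilatedEulerPolyK (a B : ℝ) (p : ℝ[X]) (hz : 0 < z) :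
    ContDiffOn ℝ ∞ (dilatedEulerPolyK a z B p) (Iio 1) :=
  contDiffOn_infty_of_hasDerivAt_family (F := fun i : ℝ × ℝ[X] ↦ dilatedEulerPolyK a z i.1 i.2)
    (σ := fun i ↦ (i.1 + 1, i.2 * (C i.1 - 2 * X))) (b := fun _ ↦ 1) isOpen_Iio
    (fun i _ ht ↦ (hasDerivAt_dilatedEulerPolyK a i.1 i.2 hz ht).congr_deriv (one_mul _).symm)
    (B, p)

lemma iteratedDeriv_dilatedEulerPolyK (a B : ℝ) (p : ℝ[X]) (n : ℕ) (hz : 0 < z) (ht : t < 1) :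
    iteratedDeriv n (dilatedEulerPolyK a z B p) t
      = dilatedEulerPolyK a z (B + n) (p * (ascPochhammer ℝ n).comp (C B - 2 * X)) t := by
  induction n generalizing t with
  | zero => simp
  | succ n ih =>
    have heq : iteratedDeriv n (dilatedEulerPolyK a z B p) =ᶠ[nhds t]
        dilatedEulerPolyK a z (B + n) (p * (ascPochhammer ℝ n).comp (C B - 2 * X)) := by
      filter_upwards [Iio_mem_nhds ht] with y hy using ih hy
    rw [iteratedDeriv_succ, heq.deriv_eq, (hasDerivAt_dilatedEulerPolyK a _ _ hz ht).deriv,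
      ascPochhammer_succ_comp, C_add, C_eq_natCast, mul_assoc]
    push_cast
    ring_nf

lemma LambdaF_eq_sum_eulerPolyK (μ ν : ℝ) (j : ℕ) {x : ℝ} (hx : 0 < x) :
    LambdaF μ ν j x = (∑ m ∈ Finset.range (j / 2 + 1), cliffordCoeff (μ / 2) m *
      (eulerPolyK (ν / 2) (x ^ 2 / 4) (ascPochhammer ℝ m * (ascPochhammer ℝ m).comp (X - C (ν / 2))
        * (ascPochhammer ℝ (j - 2 * m)).comp (C (μ / 2 + ν / 2 + 1) - 2 * X))
        / (j - 2 * m).factorial)) / 2 := by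
  set z := x ^ 2 / 4
  have hz : 0 < z := by positivity
  set a := ν / 2
  set A := μ / 2 + a + 1
  let w (t : ℝ) : ℝ := z / (1 - t) ^ 2
  let g : ℝ → ℝ := dilatedEulerPolyK a z A 1
  have hw : ContDiffAt ℝ j w 0 := contDiffAt_const.div (by fun_prop) (by norm_num)
  have hg : ContDiffAt ℝ j g 0 :=
    ((contDiffOn_dilatedEulerPolyK a A 1 hz).contDiffAt (Iio_mem_nhds one_pos)).of_le
      (mod_cast le_top)
  have hgen : (fun t ↦ genFun μ ν t x) =ᶠ[nhds 0]
      fun t ↦ 1 / 2 * ((∑' m, cliffordCoeff (μ / 2) m * (t ^ 2 * w t) ^ m) * g t) := by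
    filter_upwards [Iio_mem_nhds one_pos] with t ht
    rw [genFun_eq_cliffordI_mul_cliffordK μ ν hx ht, cliffordI]
    simp only [g, dilatedEulerPolyK, eulerPolyK_one]
    ring
  have hterm (m : ℕ) : (fun t ↦ w t ^ m * g t) =ᶠ[nhds 0]
      dilatedEulerPolyK a z A (ascPochhammer ℝ m * (ascPochhammer ℝ m).comp (X - C a)) := by
    filter_upwards [Iio_mem_nhds one_pos] with t (ht : t < 1)
    have hwt : 0 < z / (1 - t) ^ 2 := by have := sub_pos.2 ht; positivity
    simp only [g, dilatedEulerPolyK, eulerPolyK_one, eulerPolyK_ascPochhammer_mul_comp a m hwt]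
    ring
  rw [LambdaF, hgen.iteratedDeriv_eq, iteratedDeriv_const_mul_field, mul_div_assoc,
    iteratedDeriv_tsum_mul_zero_div_factorial (summable_cliffordCoeff_mul_pow _) hw hg,
    one_div_mul_eq_div]
  congr! 3 with m
  rw [(hterm m).iteratedDeriv_eq, iteratedDeriv_dilatedEulerPolyK a A _ _ hz one_pos]
  simp [dilatedEulerPolyK]

end EulerCalculus

local notation "poch[" x "," k "]" => Polynomial.eval x (ascPochhammer ℝ k)

section HypergeometricSymbol

lemma ascPochhammer_eval_succ_left (x : ℝ) (k : ℕ) : poch[x, k + 1] = x * poch[x + 1, k] := by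
  simp [ascPochhammer_succ_left]

lemma mul_ascPochhammer_eval_add_one (x : ℝ) (k : ℕ) :
    x * poch[x + 1, k + 1] = poch[x, k] * (x + k) * (x + k + 1) := by
  rw [← ascPochhammer_eval_succ_left, ascPochhammer_succ_eval, ascPochhammer_succ_eval]
  push_cast
  ring

/-- The coefficient of `t ^ n` in `(1 - t) ^ (-B)`. Integer indices make the recurrence
`binomialSeriesCoeff_recurrence` free of boundary cases. -/
noncomputable def binomialSeriesCoeff (B : ℝ) (n : ℤ) : ℝ :=
  if n < 0 then 0 else poch[B, n.toNat] / n.toNat.factorial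

lemma binomialSeriesCoeff_of_neg (B : ℝ) {n : ℤ} (hn : n < 0) : binomialSeriesCoeff B n = 0 :=
  if_pos hn

lemma binomialSeriesCoeff_natCast (B : ℝ) (n : ℕ) :
    binomialSeriesCoeff B n = poch[B, n] / n.factorial := by
  simp [binomialSeriesCoeff]

lemma binomialSeriesCoeff_recurrence (B : ℝ) (n : ℤ) :
    n * binomialSeriesCoeff B n = (n - 1 + B) * binomialSeriesCoeff B (n - 1) := by
  rcases lt_trichotomy n 0 with hn | rfl | hn
  · simp [binomialSeriesCoeff_of_neg B hn,
      binomialSeriesCoeff_of_neg B (show n - 1 < 0 by omega)]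
  · rw [binomialSeriesCoeff_of_neg B (show (0 - 1 : ℤ) < 0 by omega)]
    simp
  · obtain ⟨m, rfl⟩ : ∃ m : ℕ, n = (m + 1 : ℕ) := ⟨(n - 1).toNat, by omega⟩
    rw [show ((m + 1 : ℕ) : ℤ) - 1 = m by push_cast; ring, binomialSeriesCoeff_natCast,
      binomialSeriesCoeff_natCast, ascPochhammer_succ_eval, Nat.factorial_succ]
    push_cast
    field_simp
    ring

lemma cliffordCoeff_recurrence (α : ℝ) (m : ℕ) :
    (m + 1) * (m + 1 + α) * cliffordCoeff α (m + 1) = cliffordCoeff α m := by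
  have h := cliffordCoeff_sub_one (α + 1) m
  rw [add_sub_cancel_right, ← succ_mul_cliffordCoeff_succ] at h
  linear_combination -h

/-- The coefficient of `t ^ (2 * m)` in `₂F₁(s, s - a; α + 1; t²) / Γ(α + 1)`. -/
noncomputable def quadraticCoeff (α a s : ℝ) (m : ℕ) : ℝ :=
  cliffordCoeff α m * (poch[s, m] * poch[s - a, m])

lemma quadraticCoeff_recurrence (α a s : ℝ) (m : ℕ) :
    (m + 1) * (m + 1 + α) * quadraticCoeff α a s (m + 1)
      = (m + s) * (m + s - a) * quadraticCoeff α a s m := by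
  simp only [quadraticCoeff, ascPochhammer_succ_eval, ← cliffordCoeff_recurrence α m]
  ring

/-- The coefficient of `t ^ j` in `(1 - t) ^ (-(α + a + 1 - 2 * s)) ₂F₁(s, s - a; α + 1; t²)`, up to
the factor `Γ(α + 1)`. Any `N > j / 2` gives the same value. -/
noncomputable def quadraticSum (α a s : ℝ) (N : ℕ) (j : ℤ) : ℝ :=
  ∑ m ∈ Finset.range N, binomialSeriesCoeff (α + a + 1 - 2 * s) (j - 2 * m) * quadraticCoeff α a s m

lemma sum_range_succ_eq_sum_range {M : Type*} [AddCommMonoid M] {G : ℕ → M} {N : ℕ}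
    (h₀ : G 0 = 0) (hN : G N = 0) :
    ∑ m ∈ Finset.range N, G (m + 1) = ∑ m ∈ Finset.range N, G m := by
  have h := Finset.sum_range_succ' G N
  rwa [Finset.sum_range_succ, h₀, hN, add_zero, add_zero, eq_comm] at h

lemma quadraticSum_recurrence (α a s : ℝ) {N : ℕ} {j : ℤ} (hj : j + 1 < 2 * N) :
    (j + 1) * (j + 1 + 2 * α) * quadraticSum α a s N (j + 1)
      = (2 * j + 2 * α + 1) * (α + a + 1 - 2 * s) * quadraticSum α a s N j
        + (j + α + a) * (j + α - a) * quadraticSum α a s N (j - 1) := by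
  simp only [quadraticSum]
  set B := α + a + 1 - 2 * s with hB
  let b (n : ℤ) : ℝ := binomialSeriesCoeff B n
  let f (m : ℕ) : ℝ := quadraticCoeff α a s m
  -- `G` collects the part of the left-hand side that can be shifted from `m` to `m + 1` so as to
  -- apply the recurrence of `f`; the rest is handled by the recurrence of `b`.
  let G (m : ℕ) : ℝ := 4 * m * (m + α) * f m * b (j + 1 - 2 * m)
  have hG : ∑ m ∈ Finset.range N, G (m + 1) = ∑ m ∈ Finset.range N, G m :=
    sum_range_succ_eq_sum_range (by simp [G])
      (by simp [G, b, binomialSeriesCoeff_of_neg B (show j + 1 - 2 * (N : ℤ) < 0 by omega)])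
  have hleft (m : ℕ) : (j + 1) * (j + 1 + 2 * α) * (b (j + 1 - 2 * m) * f m)
      = (j + 1 - 2 * m) * (j + 1 + 2 * m + 2 * α) * b (j + 1 - 2 * m) * f m + G m := by
    simp only [G]
    ring
  have hterm (m : ℕ) :
      (j + 1 - 2 * m) * (j + 1 + 2 * m + 2 * α) * b (j + 1 - 2 * m) * f m + G (m + 1)
        = (2 * j + 2 * α + 1) * B * (b (j - 2 * m) * f m)
          + (j + α + a) * (j + α - a) * (b (j - 1 - 2 * m) * f m) := by
    have hb := binomialSeriesCoeff_recurrence B (j + 1 - 2 * m)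
    have hb' := binomialSeriesCoeff_recurrence B (j - 2 * m)
    have hf : (m + 1) * (m + 1 + α) * f (m + 1) = (m + s) * (m + s - a) * f m :=
      quadraticCoeff_recurrence α a s m
    simp only [G]
    rw [show j + 1 - 2 * (m : ℤ) - 1 = j - 2 * m by ring] at hb
    rw [show j - 2 * (m : ℤ) - 1 = j - 1 - 2 * m by ring] at hb'
    rw [show j + 1 - 2 * ((m + 1 : ℕ) : ℤ) = j - 1 - 2 * m by push_cast; ring]
    rw [show s = (α + a + 1 - B) / 2 by rw [hB]; ring] at hf
    push_cast at hb hb' ⊢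
    linear_combination ((j + 1 + 2 * m + 2 * α) * hb + (j + 1 + 2 * m + 2 * α - B) * hb') * f m
      + 4 * b (j - 1 - 2 * m) * hf
  change _ * ∑ m ∈ Finset.range N, b (j + 1 - 2 * m) * f m = _
  rw [Finset.mul_sum, Finset.sum_congr rfl fun m _ ↦ hleft m, Finset.sum_add_distrib, ← hG,
    ← Finset.sum_add_distrib, Finset.sum_congr rfl fun m _ ↦ hterm m, Finset.sum_add_distrib,
    ← Finset.mul_sum, ← Finset.mul_sum]

/-- The coefficients, in the basis of the rising factorials of `s`, of the polynomial
`(α + a + 1)_j / (j! Γ(α + 1)) ₃F₂(-j, j + 2α + 1, s; α + a + 1, α + 1; 1)`. -/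
noncomputable def hypergeometricCoeff (α a : ℝ) (j k : ℕ) : ℝ :=
  poch[α + a + 1, j] / j.factorial * (poch[-(j : ℝ), k] * poch[j + 2 * α + 1, k])
    / poch[α + a + 1, k] * cliffordCoeff α k

lemma hypergeometricCoeff_of_lt (α a : ℝ) {j k : ℕ} (h : j < k) :
    hypergeometricCoeff α a j k = 0 := by
  simp [hypergeometricCoeff, ascPochhammer_eval_neg_coe_nat_of_lt h]

lemma hypergeometricCoeff_recurrence_zero (α a : ℝ) (j : ℕ) :
    (j + 2) * (j + 2 + 2 * α) * hypergeometricCoeff α a (j + 2) 0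
      = (2 * j + 2 * α + 3) * (α + a + 1) * hypergeometricCoeff α a (j + 1) 0
        + (j + 1 + α + a) * (j + 1 + α - a) * hypergeometricCoeff α a j 0 := by
  simp only [hypergeometricCoeff, ascPochhammer_succ_eval, Nat.factorial_succ]
  push_cast
  simp only [ascPochhammer_zero, Polynomial.eval_one]
  field_simp
  ring

lemma hypergeometricCoeff_recurrence_succ {α a : ℝ} (hα : -1 < α) (ha : 0 < α + a + 1)
    (j k : ℕ) :
    (j + 2) * (j + 2 + 2 * α) * hypergeometricCoeff α a (j + 2) (k + 1)
      = (2 * j + 2 * α + 3) * ((α + a + 1 + 2 * (k + 1)) * hypergeometricCoeff α a (j + 1) (k + 1)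
          - 2 * hypergeometricCoeff α a (j + 1) k)
        + (j + 1 + α + a) * (j + 1 + α - a) * hypergeometricCoeff α a j (k + 1) := by
  obtain ⟨A, rfl⟩ : ∃ A, a = A - α - 1 := ⟨α + a + 1, by ring⟩
  rw [show α + (A - α - 1) + 1 = A by ring] at ha
  have hA := ascPochhammer_pos k A ha
  have hjα : (j : ℝ) + 2 * α + 2 ≠ 0 := by linarith [(j.cast_nonneg : (0 : ℝ) ≤ j)]
  have hup : poch[j + 2 * α + 3, k + 1]
      = poch[j + 2 * α + 2, k] * (j + 2 * α + 2 + k) * (j + 2 * α + 3 + k) / (j + 2 * α + 2) := by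
    have h := mul_ascPochhammer_eval_add_one (j + 2 * α + 2) k
    rw [show (j : ℝ) + 2 * α + 2 + 1 = j + 2 * α + 3 by ring] at h
    rw [eq_div_iff hjα]
    linear_combination h
  have hup' : poch[j + 2 * α + 1, k + 1] = (j + 2 * α + 1) * poch[j + 2 * α + 2, k] := by
    rw [ascPochhammer_eval_succ_left]
    ring_nf
  have hdown : poch[-(j + 2 : ℝ), k + 1] = -(j + 2) * poch[-(j + 1 : ℝ), k] := by
    rw [ascPochhammer_eval_succ_left]
    ring_nf
  have hdown' : poch[-(j : ℝ), k + 1]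
      = -(poch[-(j + 1 : ℝ), k] * (-(j + 1) + k) * (-j + k)) / (j + 1) := by
    have h := mul_ascPochhammer_eval_add_one (-(j + 1)) k
    rw [show -((j : ℝ) + 1) + 1 = -j by ring] at h
    rw [eq_div_iff (by positivity)]
    linear_combination -h
  simp only [hypergeometricCoeff, ← cliffordCoeff_recurrence α k]
  push_cast
  rw [show (j : ℝ) + 2 + 2 * α + 1 = j + 2 * α + 3 by ring,
    show (j : ℝ) + 1 + 2 * α + 1 = j + 2 * α + 2 by ring, hup, hup', hdown, hdown']
  simp only [show α + (A - α - 1) + 1 = A by ring, ascPochhammer_succ_eval, Nat.factorial_succ]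
  push_cast
  field_simp
  ring

/-- The value at `s` of the polynomial with coefficients `hypergeometricCoeff`. Any `N > j` gives
the same value. -/
noncomputable def hypergeometricSum (α a s : ℝ) (N j : ℕ) : ℝ :=
  ∑ k ∈ Finset.range N, hypergeometricCoeff α a j k * poch[s, k]

lemma sub_two_mul_mul_sum_ascPochhammer (A s : ℝ) {c : ℕ → ℝ} {N : ℕ} (hc : c N = 0) :
    (A - 2 * s) * ∑ k ∈ Finset.range (N + 1), c k * poch[s, k]
      = A * c 0 + ∑ k ∈ Finset.range N,
          ((A + 2 * (k + 1)) * c (k + 1) - 2 * c k) * poch[s, k + 1] := by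
  have hterm (k : ℕ) : (A - 2 * s) * (c k * poch[s, k])
      = (A + 2 * k) * c k * poch[s, k] - 2 * c k * poch[s, k + 1] := by
    rw [ascPochhammer_succ_eval]
    ring
  rw [Finset.mul_sum, Finset.sum_congr rfl fun k _ ↦ hterm k, Finset.sum_sub_distrib,
    Finset.sum_range_succ', Finset.sum_range_succ _ N, hc]
  simp only [sub_mul, Finset.sum_sub_distrib, ascPochhammer_zero, Polynomial.eval_one]
  push_cast
  ring

lemma hypergeometricSum_recurrence {α a : ℝ} (hα : -1 < α) (ha : 0 < α + a + 1) (s : ℝ)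
    {N j : ℕ} (hj : j + 1 < N) :
    (j + 2) * (j + 2 + 2 * α) * hypergeometricSum α a s (N + 1) (j + 2)
      = (2 * j + 2 * α + 3) * (α + a + 1 - 2 * s) * hypergeometricSum α a s (N + 1) (j + 1)
        + (j + 1 + α + a) * (j + 1 + α - a) * hypergeometricSum α a s (N + 1) j := by
  let c := hypergeometricCoeff α a
  have hsucc : (j + 2) * (j + 2 + 2 * α) * ∑ k ∈ Finset.range N, c (j + 2) (k + 1) * poch[s, k + 1]
      = (2 * j + 2 * α + 3) * ∑ k ∈ Finset.range N,
          ((α + a + 1 + 2 * (k + 1)) * c (j + 1) (k + 1) - 2 * c (j + 1) k) * poch[s, k + 1]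
        + (j + 1 + α + a) * (j + 1 + α - a)
          * ∑ k ∈ Finset.range N, c j (k + 1) * poch[s, k + 1] := by
    rw [Finset.mul_sum, Finset.mul_sum, Finset.mul_sum, ← Finset.sum_add_distrib]
    refine Finset.sum_congr rfl fun k _ ↦ ?_
    linear_combination poch[s, k + 1] * hypergeometricCoeff_recurrence_succ hα ha j k
  rw [mul_assoc (2 * (j : ℝ) + 2 * α + 3)]
  simp only [hypergeometricSum]
  rw [sub_two_mul_mul_sum_ascPochhammer _ _ (hypergeometricCoeff_of_lt α a hj),
    Finset.sum_range_succ', Finset.sum_range_succ']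
  simp only [ascPochhammer_zero, Polynomial.eval_one]
  linear_combination hsucc + hypergeometricCoeff_recurrence_zero α a j

lemma quadraticSum_zero (α a s : ℝ) (N : ℕ) :
    quadraticSum α a s (N + 1) 0 = cliffordCoeff α 0 := by
  rw [quadraticSum, Finset.sum_range_succ', Finset.sum_eq_zero fun m _ ↦ by
    rw [binomialSeriesCoeff_of_neg _ (by omega), zero_mul]]
  simp [binomialSeriesCoeff, quadraticCoeff]

lemma quadraticSum_one (α a s : ℝ) (N : ℕ) :
    quadraticSum α a s (N + 1) 1 = (α + a + 1 - 2 * s) * cliffordCoeff α 0 := by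
  rw [quadraticSum, Finset.sum_range_succ', Finset.sum_eq_zero fun m _ ↦ by
    rw [binomialSeriesCoeff_of_neg _ (by omega), zero_mul]]
  simp [binomialSeriesCoeff, quadraticCoeff]

lemma hypergeometricSum_zero (α a s : ℝ) (N : ℕ) :
    hypergeometricSum α a s (N + 1) 0 = cliffordCoeff α 0 := by
  rw [hypergeometricSum, Finset.sum_range_succ', Finset.sum_eq_zero fun k _ ↦ by
    rw [hypergeometricCoeff_of_lt _ _ (by omega), zero_mul]]
  simp [hypergeometricCoeff]

lemma hypergeometricSum_one {α a : ℝ} (ha : 0 < α + a + 1) (s : ℝ) (N : ℕ) :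
    hypergeometricSum α a s (N + 2) 1 = (α + a + 1 - 2 * s) * cliffordCoeff α 0 := by
  rw [hypergeometricSum, Finset.sum_range_succ', Finset.sum_range_succ',
    Finset.sum_eq_zero fun k _ ↦ by
      rw [hypergeometricCoeff_of_lt _ _ (by omega), zero_mul]]
  simp only [hypergeometricCoeff, ← cliffordCoeff_recurrence α 0]
  simp
  field_simp
  ring

lemma quadraticSum_eq_hypergeometricSum {α a : ℝ} (hα : -1 < α) (ha : 0 < α + a + 1) (s : ℝ)
    {N j : ℕ} (hj : j < N) :
    quadraticSum α a s (N + 1) j = hypergeometricSum α a s (N + 1) j := by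
  induction j using Nat.twoStepInduction with
  | zero => rw [hypergeometricSum_zero, Nat.cast_zero, quadraticSum_zero]
  | one =>
    obtain ⟨N, rfl⟩ := Nat.exists_eq_add_of_lt hj
    rw [Nat.cast_one, quadraticSum_one, show 1 + N + 1 + 1 = N + 1 + 2 by ring,
      hypergeometricSum_one ha]
  | more j ih₀ ih₁ =>
    have hquad := quadraticSum_recurrence α a s (N := N + 1) (j := j + 1) (by push_cast; omega)
    have hhyp := hypergeometricSum_recurrence hα ha s (N := N) (j := j) (by omega)
    have hne : (j + 2) * (j + 2 + 2 * α) ≠ 0 :=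
      (mul_pos (by positivity) (by linarith [(j.cast_nonneg : (0 : ℝ) ≤ j)])).ne'
    refine mul_left_cancel₀ hne ?_
    rw [hhyp, ← ih₀ (by omega), ← ih₁ (by omega)]
    rw [add_sub_cancel_right] at hquad
    push_cast at hquad ⊢
    rw [show (j : ℤ) + 2 = j + 1 + 1 by ring]
    linear_combination hquad

open Polynomial in
lemma sum_ascPochhammer_eq_sum_hypergeometricCoeff {α a : ℝ} (hα : -1 < α) (ha : 0 < α + a + 1)
    (j : ℕ) :
    ∑ m ∈ Finset.range (j / 2 + 1), C (cliffordCoeff α m / (j - 2 * m).factorial) *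
        (ascPochhammer ℝ m * (ascPochhammer ℝ m).comp (X - C a)
          * (ascPochhammer ℝ (j - 2 * m)).comp (C (α + a + 1) - 2 * X))
      = ∑ k ∈ Finset.range (j + 1), C (hypergeometricCoeff α a j k) * ascPochhammer ℝ k := by
  refine Polynomial.funext fun s ↦ ?_
  have h := quadraticSum_eq_hypergeometricSum hα ha s (Nat.lt_succ_self j)
  rw [hypergeometricSum, Finset.sum_range_succ, hypergeometricCoeff_of_lt _ _ j.lt_succ_self,
    zero_mul, add_zero] at h
  simp only [eval_finsetSum, eval_mul, eval_C]
  rw [← h, quadraticSum]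
  refine Finset.sum_subset_zero_on_sdiff (by simp; omega) (fun m hm ↦ ?_) fun m hm ↦ ?_
  · simp only [Finset.mem_sdiff, Finset.mem_range] at hm
    rw [binomialSeriesCoeff_of_neg _ (by omega), zero_mul]
  · have hm' : 2 * m ≤ j := by rw [Finset.mem_range] at hm; omega
    rw [show (j : ℤ) - 2 * m = (j - 2 * m : ℕ) by omega, binomialSeriesCoeff_natCast,
      quadraticCoeff]
    simp only [eval_comp, eval_sub, eval_mul, eval_X, eval_C, eval_ofNat]
    ring

lemma LambdaF_eq_sum_hypergeometricCoeff {μ ν : ℝ} (hμ : -2 < μ) (hμν : 0 < μ + ν + 2) (j : ℕ)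
    {x : ℝ} (hx : 0 < x) :
    LambdaF μ ν j x = (∑ k ∈ Finset.range (j + 1), hypergeometricCoeff (μ / 2) (ν / 2) j k *
      ((x ^ 2 / 4) ^ k * cliffordK (ν / 2 + k) (x ^ 2 / 4))) / 2 := by
  have h := congrArg (eulerPolyK (ν / 2) (x ^ 2 / 4)) (sum_ascPochhammer_eq_sum_hypergeometricCoeff
    (α := μ / 2) (a := ν / 2) (by linarith) (by linarith) j)
  simp only [map_sum, eulerPolyK_C_mul,
    eulerPolyK_ascPochhammer (ν / 2) _ (show 0 < x ^ 2 / 4 by positivity)] at h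
  rw [LambdaF_eq_sum_eulerPolyK μ ν j hx, ← h]
  congr! 2 with m
  ring

end HypergeometricSymbol

section Moments

lemma lintegral_lintegral_lintegral_rotate {α β γ : Type*} [MeasurableSpace α] [MeasurableSpace β]
    [MeasurableSpace γ] {μ : Measure α} {ν : Measure β} {ξ : Measure γ} [SFinite μ] [SFinite ν]
    [SFinite ξ] {f : α → β → γ → ENNReal} (hf : Measurable fun w : α × β × γ ↦ f w.1 w.2.1 w.2.2) :
    ∫⁻ x, ∫⁻ y, ∫⁻ z, f x y z ∂ξ ∂ν ∂μ = ∫⁻ y, ∫⁻ z, ∫⁻ x, f x y z ∂μ ∂ξ ∂ν := by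
  have hassoc : Measurable fun w : (α × β) × γ ↦ f w.1.1 w.1.2 w.2 :=
    hf.comp (by fun_prop : Measurable fun w : (α × β) × γ ↦ (w.1.1, w.1.2, w.2))
  rw [lintegral_lintegral_swap hassoc.lintegral_prod_right'.aemeasurable]
  refine lintegral_congr fun y ↦ lintegral_lintegral_swap (Measurable.aemeasurable ?_)
  exact hf.comp (by fun_prop : Measurable fun w : α × γ ↦ (w.1, y, w.2))

variable {K a b c p q r s u : ℝ}

lemma lintegral_const_mul_rpow_mul_exp (hK : 0 ≤ K) (ha : 0 < a) (hc : 0 < c) :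
    ∫⁻ x in Ioi 0, ENNReal.ofReal (K * (x ^ (a - 1) * exp (-(c * x))))
      = ENNReal.ofReal (K * (c ^ (-a) * Gamma a)) := by
  have h := integral_rpow_mul_exp_neg_mul_Ioi ha hc
  rw [one_div, inv_rpow hc.le, ← rpow_neg hc.le] at h
  have hint : IntegrableOn (fun x ↦ x ^ (a - 1) * exp (-(c * x))) (Ioi 0) := by
    refine Integrable.of_integral_ne_zero ?_
    have := Gamma_pos_of_pos ha
    rw [h]
    positivity
  rw [← h, ← integral_const_mul, ofReal_integral_eq_lintegral_ofReal (hint.const_mul K)]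
  filter_upwards [ae_restrict_mem measurableSet_Ioi] with x (hx : 0 < x)
  simp only [Pi.zero_apply]
  positivity

lemma lintegral_lintegral_const_mul_rpow_mul_exp (hK : 0 ≤ K) (ha : 0 < a) (hb : 0 < b)
    (hc : 0 < c) :
    ∫⁻ x in Ioi 0, ∫⁻ y in Ioi 0, ENNReal.ofReal
        (K * (x ^ (a - 1) * exp (-(c * x)) * (y ^ (b - 1) * exp (-(c * y)))))
      = ENNReal.ofReal (K * (c ^ (-(a + b)) * (Gamma a * Gamma b))) := by
  have := Gamma_pos_of_pos hb
  calc
    _ = ∫⁻ x in Ioi 0, ENNReal.ofReal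
          (K * (c ^ (-b) * Gamma b) * (x ^ (a - 1) * exp (-(c * x)))) := by
      refine setLIntegral_congr_fun measurableSet_Ioi fun x (hx : 0 < x) ↦ ?_
      simp only [← mul_assoc K]
      rw [lintegral_const_mul_rpow_mul_exp (by positivity) hb hc]
      ring_nf
    _ = _ := by
      rw [lintegral_const_mul_rpow_mul_exp (by positivity) ha hc, neg_add, rpow_add hc]
      ring_nf

lemma lintegral_const_mul_rpow_mul_one_add_rpow (hK : 0 ≤ K) (ha : 0 < a) (hb : 0 < b) :
    ∫⁻ x in Ioi 0, ENNReal.ofReal (K * (x ^ (a - 1) * (1 + x) ^ (-(a + b))))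
      = ENNReal.ofReal (K * (Gamma a * Gamma b / Gamma (a + b))) := by
  have hab := Gamma_pos_of_pos (add_pos ha hb)
  set L := K / Gamma (a + b) with hL
  have : 0 ≤ L := by positivity
  have hKL : K = L * Gamma (a + b) := (div_mul_cancel₀ _ hab.ne').symm
  calc
    _ = ∫⁻ x in Ioi 0, ∫⁻ t in Ioi 0,
          ENNReal.ofReal (L * x ^ (a - 1) * (t ^ (a + b - 1) * exp (-((1 + x) * t)))) := by
      refine setLIntegral_congr_fun measurableSet_Ioi fun x (hx : 0 < x) ↦ ?_
      rw [lintegral_const_mul_rpow_mul_exp (by positivity) (by positivity) (by positivity), hKL]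
      ring_nf
    _ = ∫⁻ t in Ioi 0, ∫⁻ x in Ioi 0,
          ENNReal.ofReal (L * (t ^ (a + b - 1) * exp (-t)) * (x ^ (a - 1) * exp (-(t * x)))) := by
      rw [lintegral_lintegral_swap (by unfold Function.uncurry; fun_prop)]
      refine lintegral_congr fun t ↦ lintegral_congr fun x ↦ ?_
      rw [show -((1 + x) * t) = -t + -(t * x) by ring, exp_add]
      ring_nf
    _ = ∫⁻ t in Ioi 0, ENNReal.ofReal (L * Gamma a * (t ^ (b - 1) * exp (-(1 * t)))) := by
      refine setLIntegral_congr_fun measurableSet_Ioi fun t (ht : 0 < t) ↦ ?_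
      rw [lintegral_const_mul_rpow_mul_exp (by positivity) ha ht,
        show a + b - 1 = b - 1 + a by ring, rpow_add ht, rpow_neg ht.le, one_mul]
      congr 1
      field_simp
    _ = _ := by
      have := Gamma_pos_of_pos ha
      rw [lintegral_const_mul_rpow_mul_exp (by positivity) hb one_pos, one_rpow, hL]
      ring_nf

lemma ofReal_cliffordK (p : ℝ) {z : ℝ} (hz : 0 < z) :
    ENNReal.ofReal (cliffordK p z) = ∫⁻ r in Ioi 0, ENNReal.ofReal (cliffordKernel p z r) := by
  refine ofReal_integral_eq_lintegral_ofReal (integrableOn_cliffordKernel p hz) ?_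
  filter_upwards [ae_restrict_mem measurableSet_Ioi] with r hr using cliffordKernel_nonneg p z hr

lemma ofReal_rpow_mul_cliffordK_mul_cliffordK (s p q : ℝ) {z : ℝ} (hz : 0 < z) :
    ENNReal.ofReal (z ^ (s - 1) * (cliffordK p z * cliffordK q z))
      = ∫⁻ r in Ioi 0, ∫⁻ u in Ioi 0,
          ENNReal.ofReal (z ^ (s - 1) * (cliffordKernel p z r * cliffordKernel q z u)) := by
  have hz' : 0 ≤ z ^ (s - 1) := by positivity
  rw [ENNReal.ofReal_mul hz', ENNReal.ofReal_mul (cliffordK_nonneg p z), ofReal_cliffordK p hz,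
    ofReal_cliffordK q hz, ← lintegral_lintegral_mul
      (measurable_cliffordKernel p z).ennreal_ofReal.aemeasurable
      (measurable_cliffordKernel q z).ennreal_ofReal.aemeasurable,
    ← lintegral_const_mul' _ _ ENNReal.ofReal_ne_top]
  refine setLIntegral_congr_fun measurableSet_Ioi fun r hr ↦ ?_
  rw [← lintegral_const_mul' _ _ ENNReal.ofReal_ne_top]
  simp only [ENNReal.ofReal_mul hz', ENNReal.ofReal_mul (cliffordKernel_nonneg p z hr)]

/-- This is the substitution `z = r * u * y`. -/
lemma lintegral_rpow_mul_cliffordKernel_mul_cliffordKernel (p q : ℝ) (hs : 0 < s) (hr : 0 < r)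
    (hu : 0 < u) :
    ∫⁻ z in Ioi 0, ENNReal.ofReal (z ^ (s - 1) * (cliffordKernel p z r * cliffordKernel q z u))
      = ∫⁻ y in Ioi 0, ENNReal.ofReal (y ^ (s - 1) *
          (r ^ (s - p - 1) * exp (-((1 + y) * r)) * (u ^ (s - q - 1) * exp (-((1 + y) * u))))) := by
  have hleft (z : ℝ) : z ^ (s - 1) * (cliffordKernel p z r * cliffordKernel q z u)
      = r ^ (-p - 1) * u ^ (-q - 1) * exp (-(r + u))
        * (z ^ (s - 1) * exp (-((r + u) / (r * u) * z))) := by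
    have hexp : exp (-r - z / r) * exp (-u - z / u)
        = exp (-(r + u)) * exp (-((r + u) / (r * u) * z)) := by
      rw [← exp_add, ← exp_add]
      congr 1
      field_simp
      ring
    rw [cliffordKernel, cliffordKernel]
    linear_combination z ^ (s - 1) * r ^ (-p - 1) * u ^ (-q - 1) * hexp
  have hright (y : ℝ) : y ^ (s - 1) *
        (r ^ (s - p - 1) * exp (-((1 + y) * r)) * (u ^ (s - q - 1) * exp (-((1 + y) * u))))
      = r ^ (s - p - 1) * u ^ (s - q - 1) * exp (-(r + u))
        * (y ^ (s - 1) * exp (-((r + u) * y))) := by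
    have hexp : exp (-((1 + y) * r)) * exp (-((1 + y) * u))
        = exp (-(r + u)) * exp (-((r + u) * y)) := by
      rw [← exp_add, ← exp_add]
      ring_nf
    linear_combination y ^ (s - 1) * r ^ (s - p - 1) * u ^ (s - q - 1) * hexp
  simp only [hleft, hright]
  rw [lintegral_const_mul_rpow_mul_exp (by positivity) hs (by positivity),
    lintegral_const_mul_rpow_mul_exp (by positivity) hs (by positivity),
    div_rpow (by positivity) (by positivity), mul_rpow hr.le hu.le,
    show s - p - 1 = -p - 1 + s by ring, rpow_add hr (-p - 1) s,
    show s - q - 1 = -q - 1 + s by ring, rpow_add hu (-q - 1) s, rpow_neg hr.le s,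
    rpow_neg hu.le s]
  congr 1
  generalize r ^ (-p - 1) = R, u ^ (-q - 1) = U
  field_simp

lemma lintegral_rpow_mul_cliffordK_mul_cliffordK (hs : 0 < s) (hp : 0 < s - p) (hq : 0 < s - q)
    (hpq : 0 < s - p - q) :
    ∫⁻ z in Ioi 0, ENNReal.ofReal (z ^ (s - 1) * (cliffordK p z * cliffordK q z))
      = ENNReal.ofReal (Gamma s * Gamma (s - p) * Gamma (s - q) * Gamma (s - p - q)
          / Gamma (2 * s - p - q)) := by
  have := Gamma_pos_of_pos hp
  have := Gamma_pos_of_pos hq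
  calc
    _ = ∫⁻ z in Ioi 0, ∫⁻ r in Ioi 0, ∫⁻ u in Ioi 0,
          ENNReal.ofReal (z ^ (s - 1) * (cliffordKernel p z r * cliffordKernel q z u)) :=
      setLIntegral_congr_fun measurableSet_Ioi fun z hz ↦
        ofReal_rpow_mul_cliffordK_mul_cliffordK s p q hz
    _ = ∫⁻ r in Ioi 0, ∫⁻ u in Ioi 0, ∫⁻ z in Ioi 0,
          ENNReal.ofReal (z ^ (s - 1) * (cliffordKernel p z r * cliffordKernel q z u)) :=
      lintegral_lintegral_lintegral_rotate (by unfold cliffordKernel; fun_prop)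
    _ = ∫⁻ r in Ioi 0, ∫⁻ u in Ioi 0, ∫⁻ y in Ioi 0, ENNReal.ofReal (y ^ (s - 1) *
          (r ^ (s - p - 1) * exp (-((1 + y) * r)) * (u ^ (s - q - 1) * exp (-((1 + y) * u))))) :=
      setLIntegral_congr_fun measurableSet_Ioi fun r hr ↦
        setLIntegral_congr_fun measurableSet_Ioi fun u hu ↦
          lintegral_rpow_mul_cliffordKernel_mul_cliffordKernel p q hs hr hu
    _ = ∫⁻ y in Ioi 0, ∫⁻ r in Ioi 0, ∫⁻ u in Ioi 0, ENNReal.ofReal (y ^ (s - 1) *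
          (r ^ (s - p - 1) * exp (-((1 + y) * r)) * (u ^ (s - q - 1) * exp (-((1 + y) * u))))) :=
      (lintegral_lintegral_lintegral_rotate (by fun_prop)).symm
    _ = ∫⁻ y in Ioi 0, ENNReal.ofReal (Gamma (s - p) * Gamma (s - q)
          * (y ^ (s - 1) * (1 + y) ^ (-(s + (s - p - q))))) := by
      refine setLIntegral_congr_fun measurableSet_Ioi fun y (hy : 0 < y) ↦ ?_
      rw [lintegral_lintegral_const_mul_rpow_mul_exp (by positivity) hp hq (by positivity),
        show -(s - p + (s - q)) = -(s + (s - p - q)) by ring]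
      ring_nf
    _ = _ := by
      rw [lintegral_const_mul_rpow_mul_one_add_rpow (by positivity) hs hpq]
      ring_nf

lemma integral_rpow_mul_cliffordK_mul_cliffordK (hs : 0 < s) (hp : 0 < s - p) (hq : 0 < s - q)
    (hpq : 0 < s - p - q) :
    ∫ z in Ioi 0, z ^ (s - 1) * (cliffordK p z * cliffordK q z)
      = Gamma s * Gamma (s - p) * Gamma (s - q) * Gamma (s - p - q) / Gamma (2 * s - p - q) := by
  have := Gamma_pos_of_pos hs
  have := Gamma_pos_of_pos hp
  have := Gamma_pos_of_pos hq
  have := Gamma_pos_of_pos hpq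
  have := Gamma_pos_of_pos (by linarith : 0 < 2 * s - p - q)
  rw [integral_eq_lintegral_of_nonneg_ae,
    lintegral_rpow_mul_cliffordK_mul_cliffordK hs hp hq hpq, ENNReal.toReal_ofReal (by positivity)]
  · filter_upwards [ae_restrict_mem measurableSet_Ioi] with z (hz : 0 < z)
    have := cliffordK_nonneg p z
    have := cliffordK_nonneg q z
    simp only [Pi.zero_apply]
    positivity
  · refine ContinuousOn.aestronglyMeasurable (fun z (hz : 0 < z) ↦ ?_) measurableSet_Ioi
    exact ((continuousAt_rpow_const z (s - 1) (.inl hz.ne')).mul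
      ((hasDerivAt_cliffordK p hz).continuousAt.mul
        (hasDerivAt_cliffordK q hz).continuousAt)).continuousWithinAt

lemma integrableOn_rpow_mul_cliffordK_mul_cliffordK (hs : 0 < s) (hp : 0 < s - p) (hq : 0 < s - q)
    (hpq : 0 < s - p - q) :
    IntegrableOn (fun z ↦ z ^ (s - 1) * (cliffordK p z * cliffordK q z)) (Ioi 0) := by
  have := Gamma_pos_of_pos hs
  have := Gamma_pos_of_pos hp
  have := Gamma_pos_of_pos hq
  have := Gamma_pos_of_pos hpq
  have := Gamma_pos_of_pos (by linarith : 0 < 2 * s - p - q)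
  refine Integrable.of_integral_ne_zero ?_
  rw [integral_rpow_mul_cliffordK_mul_cliffordK hs hp hq hpq]
  positivity

lemma integral_comp_sq_div_four_mul_rpow (f : ℝ → ℝ) (s : ℝ) :
    ∫ x in Ioi 0, f (x ^ 2 / 4) * x ^ (2 * s - 1)
      = 2 ^ (2 * s - 1) * ∫ z in Ioi 0, f z * z ^ (s - 1) := by
  calc
    _ = ∫ x in Ioi 0, (2 * x ^ ((2 : ℝ) - 1)) •
          (f (1 / 4 * x ^ (2 : ℝ)) * (4 * (1 / 4 * x ^ (2 : ℝ))) ^ (s - 1) / 2) := by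
      refine setIntegral_congr_fun measurableSet_Ioi fun x (hx : 0 < x) ↦ ?_
      rw [smul_eq_mul, show 4 * (1 / 4 * x ^ (2 : ℝ)) = x ^ (2 : ℝ) by ring, ← rpow_mul hx.le,
        rpow_two, show 2 * s - 1 = (2 - 1) + 2 * (s - 1) by ring, rpow_add hx, one_div_mul_eq_div]
      ring
    _ = ∫ y in Ioi 0, f (1 / 4 * y) * (4 * (1 / 4 * y)) ^ (s - 1) / 2 :=
      integral_comp_rpow_Ioi_of_pos
        (g := fun y ↦ f (1 / 4 * y) * (4 * (1 / 4 * y)) ^ (s - 1) / 2) two_pos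
    _ = 4 * ∫ z in Ioi 0, f z * (4 * z) ^ (s - 1) / 2 := by
      rw [integral_comp_mul_left_Ioi (fun z ↦ f z * (4 * z) ^ (s - 1) / 2) 0
        (by norm_num : (0 : ℝ) < 1 / 4)]
      norm_num
    _ = _ := by
      have hpow : (2 : ℝ) ^ (2 * s - 1) = 2 * 4 ^ (s - 1) := by
        rw [show 2 * s - 1 = 1 + 2 * (s - 1) by ring, rpow_add two_pos, rpow_mul two_pos.le]
        norm_num
      rw [← integral_const_mul, ← integral_const_mul]
      refine setIntegral_congr_fun measurableSet_Ioi fun z (hz : 0 < z) ↦ ?_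
      rw [mul_rpow four_pos.le hz.le, hpow]
      ring

end Moments

section Summation

lemma Gamma_add_natCast_eq_ascPochhammer {x : ℝ} (hx : 0 < x) (k : ℕ) :
    Gamma (x + k) = poch[x, k] * Gamma x := by
  induction k with
  | zero => simp
  | succ k ih =>
    push_cast
    rw [ascPochhammer_succ_eval, ← add_assoc, Gamma_add_one (by positivity), ih]
    ring

lemma ascPochhammer_eval_neg_sub_natCast (x : ℝ) (n : ℕ) :
    poch[-x - n, n] = (-1) ^ n * poch[x + 1, n] := by
  rw [show -x - n = -(x + n) by ring, ascPochhammer_eval_neg_eq_descPochhammer,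
    descPochhammer_eval_eq_ascPochhammer, add_sub_cancel_right]

lemma ascPochhammer_eval_neg_natCast_div_factorial (n k : ℕ) :
    poch[-(n : ℝ), k] / k.factorial = (-1) ^ k * n.choose k := by
  rw [ascPochhammer_eval_neg_eq_descPochhammer, Nat.cast_choose_eq_descPochhammer_div,
    mul_div_assoc]

lemma sum_ascPochhammer_neg_div_factorial_mul (n : ℕ) (f : ℝ → ℝ) (y : ℝ) :
    ∑ l ∈ Finset.range (n + 1), poch[-(n : ℝ), l] / l.factorial * f (y + l)
      = (-1) ^ n * (fwdDiff 1)^[n] f y := by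
  rw [fwdDiff_iter_eq_sum_shift, Finset.mul_sum]
  refine Finset.sum_congr rfl fun l hl ↦ ?_
  obtain ⟨m, rfl⟩ := Nat.exists_eq_add_of_le (Finset.mem_range_succ_iff.mp hl)
  have hsq : ((-1 : ℝ) ^ m) * (-1) ^ m = 1 := by rw [← mul_pow]; simp
  simp only [ascPochhammer_eval_neg_natCast_div_factorial, Nat.add_sub_cancel_left, zsmul_eq_mul,
    nsmul_eq_mul, mul_one]
  push_cast
  rw [pow_add]
  linear_combination (-(-1 : ℝ) ^ l * (l + m).choose l * f (y + l)) * hsq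

lemma fwdDiff_iter_inv {y : ℝ} (hy : 0 < y) (n : ℕ) :
    (fwdDiff 1)^[n] (fun x : ℝ ↦ x⁻¹) y = (-1) ^ n * n.factorial / poch[y, n + 1] := by
  induction n generalizing y with
  | zero => simp
  | succ n ih =>
    have hpos := ascPochhammer_pos (n + 1) (y + 1) (by positivity)
    have hcomm : poch[y, n + 1] * (y + (n + 1)) = y * poch[y + 1, n + 1] := by
      rw [← ascPochhammer_eval_succ_left, ascPochhammer_succ_eval (n + 1) y]
      push_cast
      ring
    have hinv : (poch[y, n + 1])⁻¹ = (y + (n + 1)) / (y * poch[y + 1, n + 1]) := by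
      rw [← hcomm, div_mul_cancel_right₀ (by positivity)]
    rw [Function.iterate_succ_apply', fwdDiff, ih hy, ih (by positivity),
      div_eq_mul_inv _ poch[y, _], hinv, ascPochhammer_eval_succ_left y (n + 1), Nat.factorial_succ]
    push_cast
    field_simp
    ring

open Polynomial

lemma sum_ascPochhammer_neg_mul_eval_eq_zero {P : ℝ[X]} {n : ℕ} (hP : P.natDegree < n) :
    ∑ l ∈ Finset.range (n + 1), poch[-(n : ℝ), l] / l.factorial * P.eval (l : ℝ) = 0 := by
  have h := sum_ascPochhammer_neg_div_factorial_mul n P.eval 0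
  simp only [zero_add] at h
  rw [h, fwdDiff_iter_eq_zero_of_degree_lt hP, Pi.zero_apply, mul_zero]

/-- This is the partial fraction expansion of `P(-c) / (c)_{n+1}`. -/
lemma sum_ascPochhammer_neg_mul_eval_div {P : ℝ[X]} {n : ℕ} (hP : P.natDegree ≤ n) {c : ℝ}
    (hc : 0 < c) :
    ∑ l ∈ Finset.range (n + 1), poch[-(n : ℝ), l] / l.factorial * (P.eval (l : ℝ) / (c + l))
      = P.eval (-c) * (n.factorial / poch[c, n + 1]) := by
  set Q : ℝ[X] := P /ₘ (X - C (-c)) with hQ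
  have hdiv (l : ℕ) : P.eval (l : ℝ) / (c + l) = Q.eval (l : ℝ) + P.eval (-c) * (c + l)⁻¹ := by
    have h := congrArg (eval (l : ℝ)) (modByMonic_add_div P (X - C (-c)))
    simp only [modByMonic_X_sub_C_eq_C_eval, eval_add, eval_C, eval_mul, eval_sub, eval_X] at h
    have : c + l ≠ 0 := by positivity
    rw [← h]
    field_simp
    ring
  have hQsum :
      ∑ l ∈ Finset.range (n + 1), poch[-(n : ℝ), l] / l.factorial * Q.eval (l : ℝ) = 0 := by
    rcases n.eq_zero_or_pos with rfl | hn
    · have hQ₀ : Q = 0 := by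
        rw [hQ, divByMonic_eq_zero_iff (monic_X_sub_C _), degree_X_sub_C]
        exact (natDegree_le_iff_degree_le.mp hP).trans_lt (by simp)
      simp [hQ₀]
    · refine sum_ascPochhammer_neg_mul_eval_eq_zero ?_
      rw [hQ, natDegree_divByMonic _ (monic_X_sub_C _), natDegree_X_sub_C]
      omega
  have hinv := sum_ascPochhammer_neg_div_factorial_mul n (fun x ↦ x⁻¹) c
  have hsq : ((-1 : ℝ) ^ n) * (-1) ^ n = 1 := by rw [← mul_pow]; simp
  rw [fwdDiff_iter_inv hc, mul_div_assoc, ← mul_assoc, hsq, one_mul] at hinv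
  simp only [hdiv, mul_add, Finset.sum_add_distrib, hQsum, zero_add, ← hinv, Finset.mul_sum]
  exact Finset.sum_congr rfl fun l _ ↦ mul_left_comm _ _ _

variable {α a : ℝ}

lemma hypergeometricCoeff_mul_Gamma (hα : -1 < α) (a : ℝ) (j k : ℕ) :
    hypergeometricCoeff α a j k * Gamma (α + 1 + k)
      = poch[α + a + 1, j] / j.factorial * (poch[-(j : ℝ), k] / k.factorial)
        * (poch[j + 2 * α + 1, k] / poch[α + a + 1, k]) := by
  have hGamma := Gamma_pos_of_pos (by linarith [(k.cast_nonneg : (0 : ℝ) ≤ k)] : 0 < α + 1 + k)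
  rw [hypergeometricCoeff, cliffordCoeff, show (k : ℝ) + α + 1 = α + 1 + k by ring]
  field_simp

lemma hypergeometricCoeff_mul_Gamma_mul_Gamma (hα : -1 / 2 < α) (ha : 0 < α + a + 1)
    (j k l : ℕ) :
    hypergeometricCoeff α a j l * Gamma (α + 1 + l) * Gamma (α + a + 1 + k + l)
      = poch[α + a + 1, j] * Gamma (α + a + 1) / (j.factorial * Gamma (j + 2 * α + 1))
        * (poch[-(j : ℝ), l] / l.factorial
          * (poch[α + a + 1 + l, k] * Gamma (j + 2 * α + 1 + l))) := by
  have hj : 0 < (j : ℝ) + 2 * α + 1 := by linarith [(j.cast_nonneg : (0 : ℝ) ≤ j)]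
  have := Gamma_pos_of_pos hj
  have := ascPochhammer_pos l _ ha
  rw [hypergeometricCoeff_mul_Gamma (by linarith), add_right_comm _ (k : ℝ),
    Gamma_add_natCast_eq_ascPochhammer (by positivity : 0 < α + a + 1 + l),
    Gamma_add_natCast_eq_ascPochhammer ha, Gamma_add_natCast_eq_ascPochhammer hj]
  generalize Gamma (j + 2 * α + 1) = g at *
  field_simp

lemma sum_hypergeometricCoeff_of_lt (hα : -1 / 2 < α) (ha : 0 < α + a + 1) {j k : ℕ}
    (hk : k < j) :
    ∑ l ∈ Finset.range (j + 1), hypergeometricCoeff α a j l * Gamma (α + 1 + l)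
      * Gamma (α + a + 1 + k + l) / Gamma (2 * α + 2 + k + l) = 0 := by
  obtain ⟨d, rfl⟩ := Nat.exists_eq_add_of_lt hk
  set P : ℝ[X] := (ascPochhammer ℝ k).comp (X + C (α + a + 1))
    * (ascPochhammer ℝ d).comp (X + C (2 * α + 2 + k)) with hP
  have hdeg : P.natDegree < k + d + 1 := by
    refine Nat.lt_succ_of_le (natDegree_mul_le.trans_eq ?_)
    simp only [natDegree_comp, ascPochhammer_natDegree, natDegree_X_add_C, mul_one]
  have hterm (l : ℕ) : poch[α + a + 1 + l, k] * Gamma ((k + d + 1 : ℕ) + 2 * α + 1 + l)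
      / Gamma (2 * α + 2 + k + l) = P.eval (l : ℝ) := by
    have hpos : 0 < 2 * α + 2 + k + l := add_pos_of_pos_of_nonneg
      (add_pos_of_pos_of_nonneg (by linarith) k.cast_nonneg) l.cast_nonneg
    rw [show ((k + d + 1 : ℕ) : ℝ) + 2 * α + 1 + l = 2 * α + 2 + k + l + d by push_cast; ring,
      Gamma_add_natCast_eq_ascPochhammer hpos, ← mul_assoc,
      mul_div_cancel_right₀ _ (Gamma_pos_of_pos hpos).ne', hP]
    simp only [eval_mul, eval_comp, eval_add, eval_X, eval_C, add_comm (l : ℝ)]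
  simp only [hypergeometricCoeff_mul_Gamma_mul_Gamma hα ha, mul_div_assoc, ← Finset.mul_sum]
    at hterm ⊢
  simp only [hterm]
  rw [sum_ascPochhammer_neg_mul_eval_eq_zero hdeg, mul_zero]

lemma sum_hypergeometricCoeff_self (hα : -1 / 2 < α) (ha : 0 < α + a + 1) (j : ℕ) :
    ∑ l ∈ Finset.range (j + 1), hypergeometricCoeff α a j l * Gamma (α + 1 + l)
      * Gamma (α + a + 1 + j + l) / Gamma (2 * α + 2 + j + l)
      = poch[α + a + 1, j] * Gamma (α + a + 1) / (j.factorial * Gamma (j + 2 * α + 1))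
        * ((-1) ^ j * poch[α - a + 1, j] * (j.factorial / poch[j + 2 * α + 1, j + 1])) := by
  have hj : 0 < (j : ℝ) + 2 * α + 1 := by linarith [(j.cast_nonneg : (0 : ℝ) ≤ j)]
  set P : ℝ[X] := (ascPochhammer ℝ j).comp (X + C (α + a + 1)) with hP
  have hdeg : P.natDegree ≤ j := by
    simp only [hP, natDegree_comp, ascPochhammer_natDegree, natDegree_X_add_C, mul_one, le_refl]
  have hval : P.eval (-(j + 2 * α + 1)) = (-1) ^ j * poch[α - a + 1, j] := by
    rw [← ascPochhammer_eval_neg_sub_natCast, hP]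
    simp only [eval_comp, eval_add, eval_X, eval_C]
    ring_nf
  have hterm (l : ℕ) : poch[α + a + 1 + l, j] * Gamma (j + 2 * α + 1 + l)
      / Gamma (2 * α + 2 + j + l) = P.eval (l : ℝ) / (j + 2 * α + 1 + l) := by
    have hpos : 0 < (j : ℝ) + 2 * α + 1 + l := by positivity
    rw [show 2 * α + 2 + j + l = j + 2 * α + 1 + l + 1 by ring, Gamma_add_one hpos.ne',
      mul_div_mul_right _ _ (Gamma_pos_of_pos hpos).ne', hP]
    simp only [eval_comp, eval_add, eval_X, eval_C, add_comm (l : ℝ)]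
  simp only [hypergeometricCoeff_mul_Gamma_mul_Gamma hα ha, mul_div_assoc, ← Finset.mul_sum]
    at hterm ⊢
  simp only [hterm]
  rw [sum_ascPochhammer_neg_mul_eval_div hdeg hj, hval]

end Summation

section Norm

variable {α a : ℝ}

lemma sum_sum_hypergeometricCoeff (hα : -1 / 2 < α) (ha : 0 < α + a + 1) (haα : 0 < α - a + 1)
    (j : ℕ) :
    ∑ k ∈ Finset.range (j + 1), ∑ l ∈ Finset.range (j + 1),
      hypergeometricCoeff α a j k * hypergeometricCoeff α a j l
        * (Gamma (α + a + 1 + k + l) * Gamma (α + 1 + l) * Gamma (α + 1 + k) * Gamma (α - a + 1)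
          / Gamma (2 * α + 2 + k + l))
      = Gamma (α + a + 1 + j) * Gamma (α - a + 1 + j)
        / (j.factorial * (2 * j + 2 * α + 1) * Gamma (j + 2 * α + 1)) := by
  have hj : 0 < (j : ℝ) + 2 * α + 1 := by linarith [(j.cast_nonneg : (0 : ℝ) ≤ j)]
  have hsplit (k l : ℕ) :
      hypergeometricCoeff α a j k * hypergeometricCoeff α a j l
        * (Gamma (α + a + 1 + k + l) * Gamma (α + 1 + l) * Gamma (α + 1 + k) * Gamma (α - a + 1)
          / Gamma (2 * α + 2 + k + l))
      = Gamma (α - a + 1) * (hypergeometricCoeff α a j k * Gamma (α + 1 + k))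
        * (hypergeometricCoeff α a j l * Gamma (α + 1 + l) * Gamma (α + a + 1 + k + l)
          / Gamma (2 * α + 2 + k + l)) := by
    ring
  have hvanish (k : ℕ) (hk : k ∈ Finset.range j) :
      Gamma (α - a + 1) * (hypergeometricCoeff α a j k * Gamma (α + 1 + k))
        * ∑ l ∈ Finset.range (j + 1), hypergeometricCoeff α a j l * Gamma (α + 1 + l)
          * Gamma (α + a + 1 + k + l) / Gamma (2 * α + 2 + k + l) = 0 := by
    rw [sum_hypergeometricCoeff_of_lt hα ha (Finset.mem_range.mp hk), mul_zero]
  simp only [hsplit, ← Finset.mul_sum]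
  rw [Finset.sum_range_succ, Finset.sum_eq_zero hvanish, zero_add,
    sum_hypergeometricCoeff_self hα ha, hypergeometricCoeff_mul_Gamma (by linarith),
    ascPochhammer_eval_neg_natCast_div_factorial, Nat.choose_self,
    Gamma_add_natCast_eq_ascPochhammer ha, Gamma_add_natCast_eq_ascPochhammer haα,
    ascPochhammer_succ_eval j (j + 2 * α + 1),
    show (j : ℝ) + 2 * α + 1 + j = 2 * j + 2 * α + 1 by ring]
  have := ascPochhammer_pos j _ ha
  have := ascPochhammer_pos j _ hj
  have := Gamma_pos_of_pos hj
  have : (2 * j + 2 * α + 1 : ℝ) ≠ 0 := by linarith [(j.cast_nonneg : (0 : ℝ) ≤ j)]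
  have hsq : ((-1 : ℝ) ^ j) * (-1) ^ j = 1 := by rw [← mul_pow]; simp
  generalize poch[j + 2 * α + 1, j] = u, Gamma (j + 2 * α + 1) = g, (-1 : ℝ) ^ j = ε,
    2 * (j : ℝ) + 2 * α + 1 = d at *
  field_simp
  linear_combination poch[α - a + 1, j] * hsq

lemma integral_sq_sum_pow_mul_cliffordK_mul_rpow (hα : -1 < α) (ha : 0 < α + a + 1)
    (haα : 0 < α - a + 1) (c : ℕ → ℝ) (n : ℕ) :
    ∫ z in Ioi 0, (∑ k ∈ Finset.range n, c k * (z ^ k * cliffordK (a + k) z)) ^ 2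
        * z ^ (α + a + 1 - 1)
      = ∑ k ∈ Finset.range n, ∑ l ∈ Finset.range n, c k * c l
        * (Gamma (α + a + 1 + k + l) * Gamma (α + 1 + l) * Gamma (α + 1 + k) * Gamma (α - a + 1)
          / Gamma (2 * α + 2 + k + l)) := by
  let g (k l : ℕ) (z : ℝ) : ℝ :=
    c k * c l * (z ^ (α + a + 1 + k + l - 1) * (cliffordK (a + k) z * cliffordK (a + l) z))
  have hα' (k : ℕ) : 0 < α + 1 + k := by linarith [(k.cast_nonneg : (0 : ℝ) ≤ k)]
  have hs (k l : ℕ) : 0 < α + a + 1 + k + l := by positivity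
  have hp (k l : ℕ) : α + a + 1 + k + l - (a + k) = α + 1 + l := by ring
  have hq (k l : ℕ) : α + a + 1 + k + l - (a + l) = α + 1 + k := by ring
  have hpq (k l : ℕ) : α + a + 1 + k + l - (a + k) - (a + l) = α - a + 1 := by ring
  have hint (k l : ℕ) : IntegrableOn (g k l) (Ioi 0) :=
    (integrableOn_rpow_mul_cliffordK_mul_cliffordK (hs k l) (by rw [hp]; exact hα' l)
      (by rw [hq]; exact hα' k) (by rwa [hpq])).const_mul _
  have hexpand : ∀ z ∈ Ioi (0 : ℝ),
      (∑ k ∈ Finset.range n, c k * (z ^ k * cliffordK (a + k) z)) ^ 2 * z ^ (α + a + 1 - 1)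
        = ∑ k ∈ Finset.range n, ∑ l ∈ Finset.range n, g k l z := fun z (hz : 0 < z) ↦ by
    rw [sq, Finset.sum_mul_sum, Finset.sum_mul]
    refine Finset.sum_congr rfl fun k _ ↦ ?_
    rw [Finset.sum_mul]
    refine Finset.sum_congr rfl fun l _ ↦ ?_
    simp only [g]
    rw [show α + a + 1 + k + l - 1 = α + a + 1 - 1 + k + l by ring, rpow_add_natCast hz.ne',
      rpow_add_natCast hz.ne']
    ring
  rw [setIntegral_congr_fun measurableSet_Ioi hexpand,
    integral_finsetSum _ fun k _ ↦ integrable_finsetSum _ fun l _ ↦ hint k l]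
  refine Finset.sum_congr rfl fun k _ ↦ ?_
  rw [integral_finsetSum _ fun l _ ↦ hint k l]
  refine Finset.sum_congr rfl fun l _ ↦ ?_
  simp only [g]
  rw [integral_const_mul, integral_rpow_mul_cliffordK_mul_cliffordK (hs k l)
    (by rw [hp]; exact hα' l) (by rw [hq]; exact hα' k) (by rwa [hpq]), hpq, hp, hq,
    show 2 * (α + a + 1 + k + l) - (a + k) - (a + l) = 2 * α + 2 + k + l by ring]

theorem lambda_L2_norm_general {μ ν : ℝ} (hμ : -1 < μ) (hν : |ν| < μ + 2) (j : ℕ) :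
    ∫ x in Ioi 0, (LambdaF μ ν j x) ^ 2 * x ^ (μ + ν + 1)
      = 2 ^ (μ + ν - 1) * Gamma (j + (μ + ν + 2) / 2) * Gamma (j + (μ - ν + 2) / 2)
          / (j.factorial * (2 * j + μ + 1) * Gamma (j + μ + 1)) := by
  obtain ⟨hν₁, hν₂⟩ := abs_lt.mp hν
  obtain ⟨α, rfl⟩ : ∃ α, μ = 2 * α := ⟨μ / 2, by ring⟩
  obtain ⟨a, rfl⟩ : ∃ a, ν = 2 * a := ⟨ν / 2, by ring⟩
  have ha : 0 < α + a + 1 := by linarith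
  have haα : 0 < α - a + 1 := by linarith
  let f (z : ℝ) : ℝ :=
    (∑ k ∈ Finset.range (j + 1), hypergeometricCoeff α a j k * (z ^ k * cliffordK (a + k) z)) ^ 2
  calc
    _ = ∫ x in Ioi 0, 1 / 4 * (f (x ^ 2 / 4) * x ^ (2 * (α + a + 1) - 1)) := by
      refine setIntegral_congr_fun measurableSet_Ioi fun x hx ↦ ?_
      rw [LambdaF_eq_sum_hypergeometricCoeff (by linarith) (by linarith) j hx,
        mul_div_cancel_left₀ α two_ne_zero, mul_div_cancel_left₀ a two_ne_zero]
      change _ = 1 / 4 * ((∑ k ∈ Finset.range (j + 1), _) ^ 2 * _)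
      rw [div_pow, show 2 * α + 2 * a + 1 = 2 * (α + a + 1) - 1 by ring]
      ring
    _ = 1 / 4 * (2 ^ (2 * (α + a + 1) - 1) * (Gamma (α + a + 1 + j) * Gamma (α - a + 1 + j)
          / (j.factorial * (2 * j + 2 * α + 1) * Gamma (j + 2 * α + 1)))) := by
      rw [integral_const_mul, integral_comp_sq_div_four_mul_rpow,
        integral_sq_sum_pow_mul_cliffordK_mul_rpow (by linarith) ha haα,
        sum_sum_hypergeometricCoeff (by linarith) ha haα]
    _ = _ := by
      rw [show 2 * (α + a + 1) - 1 = 2 * α + 2 * a - 1 + 2 by ring, rpow_add two_pos, rpow_two]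
      ring_nf

end Norm

/-- **Corollary 4.1.** The squared `L²`-norm of `Λ_j^{μ,ν}`. -/
theorem lambda_L2_norm (μ ν : ℤ) (hcond : IntCond μ ν) (j : ℕ) :
    ∫ x in Set.Ioi (0 : ℝ), (LambdaF μ ν j x) ^ 2 * x ^ ((μ : ℝ) + ν + 1)
      = (2 : ℝ) ^ ((μ : ℝ) + ν - 1) * Real.Gamma (j + ((μ : ℝ) + ν + 2) / 2)
          * Real.Gamma (j + ((μ : ℝ) - ν + 2) / 2)
          / (j.factorial * (2 * j + (μ : ℝ) + 1) * Real.Gamma (j + (μ : ℝ) + 1)) := by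
  obtain ⟨hν, hνμ, -, hne⟩ := hcond
  have hμ : -1 < μ := by omega
  have hν' : |ν| < μ + 2 := by rw [abs_lt]; omega
  exact lambda_L2_norm_general (by exact_mod_cast hμ) (by exact_mod_cast hν') j
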